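/- arXiv:1405.3261 — 5 statements merged into one kernel-verified Lean document; each statement's English description precedes it below -/
import Mathlib

section
/- Let Ω ⊂ ℝ^N be a bounded open set with C² boundary and let f ∈ C(Ω̄). Then there exists a modulus of continuity m, depending only on N, σ, Ω and f, such that for every ε ∈ (0,1) and every solution u_ε of the Dirichlet problem −I_ε[u_ε] = f in Ω, u_ε = 0 in Ωᶜ, one has |u_ε(x) − u_ε(y)| ≤ m(|x − y|) for all x, y ∈ Ω. -/
open MeasureTheory Metric Set Filter

noncomputable section

/-- The zero-order kernel `K_ε(z) = 1/(ε^{N+2σ} + |z|^{N+2σ})`. -/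
def Kker (N : ℕ) (σ ε : ℝ) (z : EuclideanSpace ℝ (Fin N)) : ℝ :=
  1 / (ε ^ ((N : ℝ) + 2 * σ) + ‖z‖ ^ ((N : ℝ) + 2 * σ))

/-- The zero-order nonlocal operator `I_ε[u](x) = ∫ (u(x+z) - u(x)) K_ε(z) dz`. -/
def Iop (N : ℕ) (σ ε : ℝ) (u : EuclideanSpace ℝ (Fin N) → ℝ)
    (x : EuclideanSpace ℝ (Fin N)) : ℝ :=
  ∫ z, (u (x + z) - u x) * Kker N σ ε z

open Classical in
/-- The signed distance to the boundary of `Ω`. -/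
def sdist (N : ℕ) (Ω : Set (EuclideanSpace ℝ (Fin N))) (x : EuclideanSpace ℝ (Fin N)) : ℝ :=
  if x ∈ closure Ω then Metric.infDist x (frontier Ω) else -Metric.infDist x (frontier Ω)

/-- `Ω` has `C²` boundary with parameter `δ₀`: the boundary is nonempty and the signed
distance is `C²` on the strip `{|d| < δ₀}`. -/
def HasC2Boundary (N : ℕ) (Ω : Set (EuclideanSpace ℝ (Fin N))) (δ₀ : ℝ) : Prop :=
  (frontier Ω).Nonempty ∧ 0 < δ₀ ∧
    ContDiffOn ℝ 2 (sdist N Ω) {x | |sdist N Ω x| < δ₀}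

/-- A modulus of continuity: nonnegative, nondecreasing on `[0,∞)`, vanishing and
continuous at `0`. -/
def IsModulus (m : ℝ → ℝ) : Prop :=
  (∀ t, 0 ≤ m t) ∧ MonotoneOn m (Set.Ici (0 : ℝ)) ∧ m 0 = 0 ∧ ContinuousAt m 0

/-- A (pointwise) solution of the Dirichlet problem `-I_ε[u] = f` in `Ω`, `u = 0` in `Ωᶜ`:
a bounded measurable function, continuous in `Ω`, vanishing outside `Ω`, solving the
equation pointwise in `Ω`. -/
def IsSolution (N : ℕ) (σ : ℝ) (Ω : Set (EuclideanSpace ℝ (Fin N)))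
    (f : EuclideanSpace ℝ (Fin N) → ℝ) (ε : ℝ)
    (u : EuclideanSpace ℝ (Fin N) → ℝ) : Prop :=
  Measurable u ∧ (∃ C, ∀ x, |u x| ≤ C) ∧ ContinuousOn u Ω ∧
    (∀ x, x ∉ Ω → u x = 0) ∧ ∀ x ∈ Ω, -Iop N σ ε u x = f x

/-!
For `ε > 0` the operator `I_ε` integrates increments against the finite jump measure `K_ε(z) dz`.
Jumps longer than the diameter of `Ω` leave `Ω` at a rate bounded below uniformly in `ε`, so at an
approximate positive maximum of a function vanishing outside `Ω` the operator is quantitatively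
negative. This gives a maximum principle, and an `L^∞` bound, uniform in `ε`.

At the boundary a solution may be discontinuous, but its jump there vanishes as `ε → 0`. Touching
`u` from above near `p ∈ ∂Ω` by a truncated quadratic of radius `r ≥ ε` costs a multiple of
`r ^ (-2σ)`; jumps into the complement of `Ω`, which fills a fixed fraction of `ball p r`,
contribute a gain of the same order. Hence passing to a smaller ball multiplies the bound on `u`
by a fixed factor `γ < 1`, and iterating (then using compactness of `∂Ω`) makes `|u|` small near
`∂Ω` for all small `ε`. The maximum principle applied to `u(· + h) - u`, whose right-hand side is
controlled by the modulus of `f`, carries this smallness into `Ω`.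

For `ε ≥ δ` the kernel is non-degenerate: small translations change the jump measure by a factor
at most `1 + ρ`, and solving the equation for `u(x)` gives the modulus directly. The supremum of
all oscillations at distance at most `t` is then the required modulus.
-/

section JumpOperator

lemma exists_mem_forall_le_add {X : Type*} {s : Set X} {g : X → ℝ} {η : ℝ} (hs : s.Nonempty)
    (hg : BddAbove (g '' s)) (hη : 0 < η) : ∃ x ∈ s, ∀ y ∈ s, g y ≤ g x + η := by
  obtain ⟨_, ⟨x, hx, rfl⟩, hlt⟩ := exists_lt_of_lt_csSup (hs.image g) (sub_lt_self _ hη)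
  exact ⟨x, hx, fun y hy => by linarith [le_csSup hg (mem_image_of_mem g hy)]⟩

variable {G : Type*} [AddCommGroup G] [MeasurableSpace G] {μ : Measure G} {u w : G → ℝ}
  {M : ℝ}

/-- The nonlocal operator `u ↦ ∫ (u (x + z) - u x) dμ(z)` with jump measure `μ`. -/
def jumpOp (μ : Measure G) (u : G → ℝ) (x : G) : ℝ :=
  ∫ z, (u (x + z) - u x) ∂μ

/-- Bounded measurable functions `u` with `-jumpOp μ u ≤ F` in `Ω`, `u ≤ 0` off `Ω` and
`|u| ≤ M`. -/
structure IsSubsolution (μ : Measure G) (Ω : Set G) (F M : ℝ) (u : G → ℝ) : Prop where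
  measurable : Measurable u
  abs_le : ∀ x, |u x| ≤ M
  nonpos : ∀ x ∉ Ω, u x ≤ 0
  neg_jumpOp_le : ∀ x ∈ Ω, -jumpOp μ u x ≤ F

lemma jumpOp_neg (u : G → ℝ) (x : G) : jumpOp μ (-u) x = -jumpOp μ u x := by
  rw [jumpOp, jumpOp, ← integral_neg]
  exact integral_congr_ae (.of_forall fun z => by simp only [Pi.neg_apply]; ring)

variable [MeasurableAdd G] [IsFiniteMeasure μ]

lemma integrable_comp_const_add (hu : Measurable u) (hM : ∀ x, |u x| ≤ M) (x : G) :
    Integrable (fun z => u (x + z)) μ :=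
  .of_bound (hu.comp (measurable_const_add x)).aestronglyMeasurable M (.of_forall fun _ => hM _)

lemma integrable_increment (hu : Measurable u) (hM : ∀ x, |u x| ≤ M) (x : G) :
    Integrable (fun z => u (x + z) - u x) μ :=
  (integrable_comp_const_add hu hM x).sub (integrable_const _)

lemma jumpOp_eq_integral_sub (hu : Measurable u) (hM : ∀ x, |u x| ≤ M) (x : G) :
    jumpOp μ u x = (∫ z, u (x + z) ∂μ) - μ.real univ * u x := by
  rw [jumpOp, integral_sub (integrable_comp_const_add hu hM x) (integrable_const _),
    integral_const, smul_eq_mul]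

lemma jumpOp_translate_sub (hu : Measurable u) (hM : ∀ x, |u x| ≤ M) (h x : G) :
    jumpOp μ (fun a => u (a + h) - u a) x = jumpOp μ u (x + h) - jumpOp μ u x := by
  rw [jumpOp, jumpOp, jumpOp, ← integral_sub (integrable_increment hu hM _)
    (integrable_increment hu hM _)]
  refine integral_congr_ae (.of_forall fun z => ?_)
  simp only [add_right_comm x z h]
  ring

lemma jumpOp_le_of_near_max (hw : Measurable w) (hM : ∀ x, |w x| ≤ M) {T : Set G}
    (hT : MeasurableSet T) {x : G} {η : ℝ} (hmax : ∀ y, w y ≤ w x + η)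
    (hwT : ∀ z ∈ T, w (x + z) ≤ 0) :
    jumpOp μ w x ≤ η * μ.real univ - w x * μ.real T := by
  have hle : ∀ z, w (x + z) - w x ≤ η - T.indicator (fun _ => w x) z := fun z => by
    by_cases hz : z ∈ T
    · rw [indicator_of_mem hz]
      linarith [hwT z hz, hmax x]
    · rw [indicator_of_notMem hz]
      linarith [hmax (x + z)]
  have hind : Integrable (T.indicator fun _ => w x) μ := (integrable_const _).indicator hT
  calc jumpOp μ w x ≤ ∫ z, (η - T.indicator (fun _ => w x) z) ∂μ :=
        integral_mono (integrable_increment hw hM x) ((integrable_const _).sub hind) hle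
    _ = η * μ.real univ - w x * μ.real T := by
        rw [integral_sub (integrable_const _) hind, integral_const, integral_indicator hT,
          setIntegral_const, smul_eq_mul, smul_eq_mul, mul_comm, mul_comm (μ.real T)]

theorem le_add_div_of_neg_jumpOp_le (hw : Measurable w) (hM : ∀ x, |w x| ≤ M) {D T : Set G}
    (hT : MeasurableSet T) {A B c : ℝ} (hA : 0 ≤ A) (hB : 0 ≤ B) (hc : 0 < c)
    (hcT : c ≤ μ.real T) (hwT : ∀ x ∈ D, ∀ z ∈ T, w (x + z) ≤ 0) (hwB : ∀ x ∉ D, w x ≤ B)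
    (hwA : ∀ x ∈ D, -jumpOp μ w x ≤ A) (x : G) : w x ≤ B + A / c := by
  by_contra! hlt
  have hAc : 0 ≤ A / c := div_nonneg hA hc.le
  set g := w x - (B + A / c) with hg
  set m := μ.real univ
  have hg0 : 0 < g := sub_pos.2 hlt
  have hm : 0 ≤ m := measureReal_nonneg
  set η := g * c / (2 * (m + c)) with hη
  have hη0 : 0 < η := by positivity
  have hηeq : η * (m + c) = g * c / 2 := by rw [hη]; field_simp
  have hηg : η ≤ g / 2 := by nlinarith
  obtain ⟨y, -, hy⟩ := exists_mem_forall_le_add (s := univ) (g := w) ⟨x, mem_univ x⟩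
    ⟨M, forall_mem_image.2 fun a _ => (le_abs_self _).trans (hM a)⟩ hη0
  have hyB : B + A / c + g / 2 ≤ w y := by linarith [hy x (mem_univ x), hg]
  have hyD : y ∈ D := by
    by_contra hyD
    linarith [hwB y hyD]
  have hjump := jumpOp_le_of_near_max (μ := μ) hw hM hT (fun a => hy a (mem_univ a)) (hwT y hyD)
  have hmass : w y * c ≤ w y * μ.real T := by gcongr; linarith
  have hlow : (B + A / c + g - η) * c ≤ w y * c := by
    gcongr
    linarith [hy x (mem_univ x)]
  have hexp : (B + A / c + g - η) * c = B * c + A + (g - η) * c := by field_simp; ring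
  nlinarith [hwA y hyD, mul_pos hg0 hc, mul_nonneg hB hc.le]

lemma IsSubsolution.le_div {Ω T : Set G} {F c : ℝ} (hu : IsSubsolution μ Ω F M u) (hF : 0 ≤ F)
    (hT : MeasurableSet T) (hc : 0 < c) (hcT : c ≤ μ.real T)
    (hΩT : ∀ x ∈ Ω, ∀ z ∈ T, x + z ∉ Ω) (x : G) : u x ≤ F / c := by
  have := le_add_div_of_neg_jumpOp_le hu.measurable hu.abs_le hT hF le_rfl hc hcT
    (fun x hx z hz => hu.nonpos _ (hΩT x hx z hz)) hu.nonpos hu.neg_jumpOp_le x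
  rwa [zero_add] at this

lemma translate_sub_le_add_div (hu : Measurable u) (hM : ∀ x, |u x| ≤ M) {Ω T : Set G}
    (hT : MeasurableSet T) {A B c : ℝ} (hA : 0 ≤ A) (hB : 0 ≤ B) (hc : 0 < c)
    (hcT : c ≤ μ.real T) (hΩT : ∀ x ∈ Ω, ∀ z ∈ T, x + z ∉ Ω) (hu0 : ∀ x ∉ Ω, u x = 0) {h : G}
    (hB' : ∀ a, a ∉ Ω ∨ a + h ∉ Ω → u (a + h) - u a ≤ B)
    (hA' : ∀ a ∈ Ω, a + h ∈ Ω → jumpOp μ u a - jumpOp μ u (a + h) ≤ A) (a : G) :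
    u (a + h) - u a ≤ B + A / c := by
  refine le_add_div_of_neg_jumpOp_le (μ := μ) (w := fun a => u (a + h) - u a) (M := M + M)
    (D := {a | a ∈ Ω ∧ a + h ∈ Ω}) ((hu.comp (measurable_add_const h)).sub hu)
    (fun x => (abs_sub _ _).trans (add_le_add (hM _) (hM _))) hT hA hB hc hcT ?_ ?_ ?_ a
  · rintro x ⟨hx, hxh⟩ z hz
    have hxz : x + z + h ∉ Ω := add_right_comm x z h ▸ hΩT _ hxh z hz
    exact (sub_eq_zero.2 ((hu0 _ hxz).trans (hu0 _ (hΩT x hx z hz)).symm)).le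
  · exact fun x hx => hB' x (not_and_or.1 hx)
  · rintro x ⟨hx, hxh⟩
    rw [jumpOp_translate_sub hu hM]
    linarith [hA' x hx hxh]

lemma integral_comp_const_add_le_of_map_le (hu : Measurable u) (hM : ∀ x, |u x| ≤ M) {ρ : ℝ}
    (hρ : 0 ≤ ρ) {x y : G}
    (hμ : μ.map (fun z => (x - y) + z) ≤ ENNReal.ofReal (1 + ρ) • μ) :
    ∫ z, u (x + z) ∂μ ≤ (∫ z, u (y + z) ∂μ) + 2 * M * ρ * μ.real univ := by
  set g : G → ℝ := fun z => u (y + z) + M with hg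
  have hg0 : ∀ z, 0 ≤ g z := fun z => by linarith [neg_le_of_abs_le (hM (y + z))]
  have hg2 : ∀ z, g z ≤ 2 * M := fun z => by linarith [le_of_abs_le (hM (y + z))]
  have hint : ∀ x, Integrable (fun z => u (x + z)) μ := integrable_comp_const_add hu hM
  have hgint : Integrable g μ := (hint y).add (integrable_const M)
  have hgM : ∫ z, g z ∂μ ≤ μ.real univ * (2 * M) := by
    simpa only [integral_const, smul_eq_mul] using
      integral_mono hgint (integrable_const (2 * M)) hg2
  have hshift : ∫ z, u (x + z) ∂μ + μ.real univ * M
      ≤ (1 + ρ) * ∫ z, g z ∂μ := calc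
    _ = ∫ z, (u (x + z) + M) ∂μ := by
        rw [integral_add (hint x) (integrable_const M), integral_const, smul_eq_mul]
    _ = ∫ z, g z ∂μ.map (fun z => (x - y) + z) := by
        rw [integral_map (measurable_const_add _).aemeasurable]
        · exact integral_congr_ae (.of_forall fun z => by simp only [hg]; congr 2; abel)
        · exact ((hu.comp (measurable_const_add y)).add_const M).aestronglyMeasurable
    _ ≤ ∫ z, g z ∂(ENNReal.ofReal (1 + ρ) • μ) :=
        integral_mono_measure hμ (.of_forall hg0) (hgint.smul_measure ENNReal.ofReal_ne_top)
    _ = (1 + ρ) * ∫ z, g z ∂μ := by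
        rw [integral_smul_measure, ENNReal.toReal_ofReal (by linarith), smul_eq_mul]
  have hgy : ∫ z, g z ∂μ = ∫ z, u (y + z) ∂μ + μ.real univ * M := by
    rw [hg, integral_add (hint y) (integrable_const M), integral_const, smul_eq_mul]
  nlinarith

lemma sub_le_of_map_le (hu : Measurable u) (hM : ∀ x, |u x| ≤ M) {c ρ ω : ℝ} (hc : 0 < c)
    (hcμ : c ≤ μ.real univ) (hρ : 0 ≤ ρ) {x y : G}
    (hμ : μ.map (fun z => (x - y) + z) ≤ ENNReal.ofReal (1 + ρ) • μ)
    (hω : |jumpOp μ u x - jumpOp μ u y| ≤ ω) : u x - u y ≤ 2 * M * ρ + ω / c := by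
  have hm : 0 < μ.real univ := hc.trans_le hcμ
  have hω0 : 0 ≤ ω := (abs_nonneg _).trans hω
  have hint := integral_comp_const_add_le_of_map_le hu hM hρ hμ
  have hjump := neg_le_of_abs_le hω
  rw [jumpOp_eq_integral_sub hu hM, jumpOp_eq_integral_sub hu hM] at hjump
  have hmul : (u x - u y) * μ.real univ ≤ 2 * M * ρ * μ.real univ + ω := by linarith
  calc u x - u y ≤ (2 * M * ρ * μ.real univ + ω) / μ.real univ := (le_div_iff₀ hm).2 hmul
    _ = 2 * M * ρ + ω / μ.real univ := by field_simp
    _ ≤ 2 * M * ρ + ω / c := by gcongr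

end JumpOperator

section QuadraticBarrier

section Norm

variable {E : Type*} [NormedAddCommGroup E] {r : ℝ}

/-- The quadratic `‖z‖² / r²` truncated at height `1`. It serves both as the barrier of the
boundary estimate and, through its integral, as a measure of the size of a jump measure seen at
scale `r`. -/
def truncSq (r : ℝ) (z : E) : ℝ :=
  min 1 (‖z‖ ^ 2 / r ^ 2)

lemma truncSq_nonneg (r : ℝ) (z : E) : 0 ≤ truncSq r z := by
  unfold truncSq
  positivity

lemma truncSq_le_one (r : ℝ) (z : E) : truncSq r z ≤ 1 := min_le_left _ _

lemma truncSq_le_div (r : ℝ) (z : E) : truncSq r z ≤ ‖z‖ ^ 2 / r ^ 2 := min_le_right _ _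

lemma abs_truncSq_le_one (r : ℝ) (z : E) : |truncSq r z| ≤ 1 := by
  rw [abs_of_nonneg (truncSq_nonneg r z)]
  exact truncSq_le_one r z

lemma truncSq_of_le {z : E} (hr : 0 < r) (hz : r ≤ ‖z‖) : truncSq r z = 1 :=
  min_eq_left ((one_le_div (by positivity)).2 (by gcongr))

lemma truncSq_of_ge {z : E} (hr : 0 < r) (hz : ‖z‖ ≤ r) : truncSq r z = ‖z‖ ^ 2 / r ^ 2 :=
  min_eq_right ((div_le_one (by positivity)).2 (by gcongr))

lemma IsSubsolution.increment_le_of_near_touching [MeasurableSpace E] {μ : Measure E}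
    {Ω S : Set E} {F M δ : ℝ} {u : E → ℝ} {p : E} (hu : IsSubsolution μ Ω F M u) (hδ : 0 < δ)
    (hSΩ : ∀ q ∈ S, q ∉ Ω) {κ level η : ℝ} (hκ : 0 ≤ κ) (hlevel : 0 ≤ level) (hη : 0 ≤ η) {x : E}
    (hx : x ∈ ball p (δ / 2)) (hux : level + κ * truncSq r (x - p) ≤ u x)
    (hmax : ∀ y ∈ ball p δ,
      u y - κ * truncSq r (y - p) ≤ u x - κ * truncSq r (x - p) + η) (z : E) :
    u (x + z) - u x ≤ κ * (truncSq r (x + z - p) - truncSq r (x - p))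
      + M * truncSq (δ / 2) z + η - ((x + ·) ⁻¹' S).indicator (fun _ => level) z := by
  have hM : 0 ≤ M := (abs_nonneg _).trans (hu.abs_le x)
  have hbarrier := mul_nonneg hκ (truncSq_nonneg r (x + z - p))
  have htail := mul_nonneg hM (truncSq_nonneg (δ / 2) z)
  by_cases hz : x + z ∈ S
  · rw [indicator_of_mem (show z ∈ (x + ·) ⁻¹' S from hz)]
    linarith [hu.nonpos _ (hSΩ _ hz)]
  rw [indicator_of_notMem (show z ∉ (x + ·) ⁻¹' S from hz)]
  rcases le_or_gt (δ / 2) ‖z‖ with hfar | hnear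
  · rw [truncSq_of_le (half_pos hδ) hfar]
    linarith [le_of_abs_le (hu.abs_le (x + z))]
  · have hxz : x + z ∈ ball p δ := by
      rw [mem_ball_iff_norm] at hx ⊢
      rw [add_sub_right_comm]
      linarith [norm_add_le (x - p) z]
    linarith [hmax _ hxz]

lemma exists_near_touching_of_lt {u : E → ℝ} {p : E} {δ a ℓ η : ℝ} (ha : 0 < a)
    (ha4 : a ≤ 1 / 4) (hℓ : 0 < ℓ) (hr : 0 < r) (hrδ : r ≤ δ)
    (huℓ : ∀ x ∈ ball p δ, u x ≤ ℓ) {x₀ : E} (hx₀ : x₀ ∈ ball p (r / 2))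
    (hlt : (1 - a / 2) * ℓ < u x₀) (hη : 0 < η) (hηa : η ≤ a * ℓ / 4) :
    ∃ x ∈ ball p r, ℓ / 2 + a * ℓ * truncSq r (x - p) ≤ u x ∧ ∀ y ∈ ball p δ,
      u y - a * ℓ * truncSq r (y - p) ≤ u x - a * ℓ * truncSq r (x - p) + η := by
  have haℓ : 0 < a * ℓ := mul_pos ha hℓ
  have hx₀δ : x₀ ∈ ball p δ := ball_subset_ball (by linarith) hx₀
  obtain ⟨x, hxδ, hmax⟩ := exists_mem_forall_le_add
    (g := fun y => u y - a * ℓ * truncSq r (y - p)) ⟨x₀, hx₀δ⟩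
    ⟨ℓ, forall_mem_image.2 fun y hy => by
      linarith [huℓ y hy, mul_nonneg haℓ.le (truncSq_nonneg r (y - p))]⟩ hη
  have hφx₀ : truncSq r (x₀ - p) ≤ 1 / 4 := calc
    _ ≤ ‖x₀ - p‖ ^ 2 / r ^ 2 := truncSq_le_div _ _
    _ ≤ (r / 2) ^ 2 / r ^ 2 := by gcongr; exact (mem_ball_iff_norm.1 hx₀).le
    _ = 1 / 4 := by field_simp; norm_num
  have hux : (1 - a) * ℓ + a * ℓ * truncSq r (x - p) < u x := by
    have : a * ℓ * truncSq r (x₀ - p) ≤ a * ℓ * (1 / 4) := by gcongr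
    linarith [hmax x₀ hx₀δ]
  refine ⟨x, ?_, by nlinarith, hmax⟩
  by_contra hxr
  rw [mem_ball_iff_norm, not_lt] at hxr
  rw [truncSq_of_le hr hxr] at hux
  linarith [huℓ x hxδ]

variable [MeasurableSpace E] [OpensMeasurableSpace E]

lemma measurable_truncSq : Measurable (truncSq r : E → ℝ) :=
  measurable_const.min ((measurable_norm.pow_const 2).div_const _)

lemma integrable_truncSq {μ : Measure E} [IsFiniteMeasure μ] :
    Integrable (truncSq r : E → ℝ) μ :=
  .of_bound measurable_truncSq.aestronglyMeasurable 1 (.of_forall (abs_truncSq_le_one r))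

end Norm

lemma integral_eq_zero_of_odd {G : Type*} [AddGroup G] [MeasurableSpace G] [MeasurableNeg G]
    {μ : Measure G} [μ.IsNegInvariant] {g : G → ℝ} (hg : ∀ z, g (-z) = -g z) :
    ∫ z, g z ∂μ = 0 := by
  have h : ∫ z, g z ∂μ = -∫ z, g z ∂μ := by
    rw [← integral_neg, ← integral_neg_eq_self g μ]
    simp only [hg]
  exact self_eq_neg.1 h

variable {E : Type*} [NormedAddCommGroup E] [InnerProductSpace ℝ E] {r : ℝ}

lemma truncSq_add_sub_le (hr : 0 < r) {y : E} (hy : ‖y‖ ≤ r) (z : E) :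
    truncSq r (y + z) - truncSq r y
      ≤ truncSq r z + 2 / r ^ 2 * (ball 0 r).indicator (fun z => inner ℝ y z) z := by
  rcases lt_or_ge ‖z‖ r with hz | hz
  · rw [indicator_of_mem (mem_ball_zero_iff.2 hz), truncSq_of_ge hr hy, truncSq_of_ge hr hz.le]
    calc truncSq r (y + z) - ‖y‖ ^ 2 / r ^ 2
        ≤ ‖y + z‖ ^ 2 / r ^ 2 - ‖y‖ ^ 2 / r ^ 2 := by gcongr; exact truncSq_le_div _ _
      _ = ‖z‖ ^ 2 / r ^ 2 + 2 / r ^ 2 * inner ℝ y z := by rw [norm_add_sq_real]; ring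
  · rw [indicator_of_notMem (by simpa only [mem_ball_zero_iff, not_lt] using hz),
      truncSq_of_le hr hz]
    linarith [truncSq_le_one r (y + z), truncSq_nonneg r y]

variable [MeasurableSpace E] [BorelSpace E] {μ : Measure E} [IsFiniteMeasure μ]

lemma integrable_indicator_ball_inner (hr : 0 < r) (y : E) :
    Integrable ((ball 0 r).indicator fun z => inner ℝ y z) μ := by
  refine .of_bound ((innerSL ℝ y).measurable.indicator measurableSet_ball).aestronglyMeasurable
    (‖y‖ * r) (.of_forall fun z => ?_)
  rw [norm_indicator_eq_indicator_norm]
  refine indicator_apply_le' (fun hz => (norm_inner_le_norm _ _).trans ?_) fun _ => by positivity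
  gcongr
  exact (mem_ball_zero_iff.1 hz).le

lemma jumpOp_truncSq_le [μ.IsNegInvariant] (hr : 0 < r) {p x : E} (hx : ‖x - p‖ ≤ r) :
    jumpOp μ (fun y => truncSq r (y - p)) x ≤ ∫ z, truncSq r z ∂μ := by
  have hodd : ∫ z, (ball 0 r).indicator (fun z => inner ℝ (x - p) z) z ∂μ = 0 := by
    refine integral_eq_zero_of_odd fun z => ?_
    by_cases hz : ‖z‖ < r <;> simp [hz]
  have hlin := (integrable_indicator_ball_inner (μ := μ) hr (x - p)).const_mul (2 / r ^ 2)
  have hmeas : Measurable fun y => truncSq r (y - p) :=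
    measurable_truncSq.comp (measurable_sub_const p)
  calc jumpOp μ (fun y => truncSq r (y - p)) x
      ≤ ∫ z, (truncSq r z
          + 2 / r ^ 2 * (ball 0 r).indicator (fun z => inner ℝ (x - p) z) z) ∂μ := by
        refine integral_mono (integrable_increment hmeas (fun _ => abs_truncSq_le_one _ _) x)
          (integrable_truncSq.add hlin) fun z => ?_
        simp only [add_sub_right_comm x z p]
        exact truncSq_add_sub_le hr hx z
    _ = ∫ z, truncSq r z ∂μ := by
        rw [integral_add integrable_truncSq hlin, integral_const_mul, hodd, mul_zero, add_zero]

variable {Ω S : Set E} {F M δ : ℝ} {u : E → ℝ} {p : E}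

lemma IsSubsolution.jumpOp_le_of_near_touching [μ.IsNegInvariant]
    (hu : IsSubsolution μ Ω F M u) (hr : 0 < r) (hrδ : 2 * r ≤ δ) (hS : MeasurableSet S)
    (hSΩ : ∀ q ∈ S, q ∉ Ω) {κ level η : ℝ} (hκ : 0 ≤ κ) (hlevel : 0 ≤ level) (hη : 0 ≤ η) {x : E}
    (hx : x ∈ ball p r) (hux : level + κ * truncSq r (x - p) ≤ u x)
    (hmax : ∀ y ∈ ball p δ,
      u y - κ * truncSq r (y - p) ≤ u x - κ * truncSq r (x - p) + η) :
    jumpOp μ u x ≤ κ * ∫ z, truncSq r z ∂μ + M * ∫ z, truncSq (δ / 2) z ∂μ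
      + η * μ.real univ - level * μ.real ((x + ·) ⁻¹' S) := by
  have hT : MeasurableSet ((x + ·) ⁻¹' S) := measurable_const_add x hS
  have hφint : Integrable (fun z => κ * (truncSq r (x + z - p) - truncSq r (x - p))) μ :=
    (integrable_increment (measurable_truncSq.comp (measurable_sub_const p))
      (fun _ => abs_truncSq_le_one _ _) x).const_mul κ
  have htailint : Integrable (fun z : E => M * truncSq (δ / 2) z) μ :=
    integrable_truncSq.const_mul M
  have hsum₂int : Integrable (fun z => κ * (truncSq r (x + z - p) - truncSq r (x - p))
      + M * truncSq (δ / 2) z) μ := hφint.add htailint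
  have hsum₃int : Integrable (fun z => κ * (truncSq r (x + z - p) - truncSq r (x - p))
      + M * truncSq (δ / 2) z + η) μ := hsum₂int.add (integrable_const η)
  have hlevelint : Integrable (((x + ·) ⁻¹' S).indicator fun _ => level) μ :=
    (integrable_const _).indicator hT
  calc jumpOp μ u x
      ≤ ∫ z, (κ * (truncSq r (x + z - p) - truncSq r (x - p)) + M * truncSq (δ / 2) z + η
          - ((x + ·) ⁻¹' S).indicator (fun _ => level) z) ∂μ :=
        integral_mono (integrable_increment hu.measurable hu.abs_le x) (hsum₃int.sub hlevelint)
          (hu.increment_le_of_near_touching (by linarith) hSΩ hκ hlevel hη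
            (ball_subset_ball (by linarith) hx) hux hmax)
    _ = κ * jumpOp μ (fun y => truncSq r (y - p)) x + M * ∫ z, truncSq (δ / 2) z ∂μ
          + η * μ.real univ - level * μ.real ((x + ·) ⁻¹' S) := by
        rw [integral_sub hsum₃int hlevelint, integral_add hsum₂int (integrable_const η),
          integral_add hφint htailint, integral_const_mul, integral_const_mul, integral_const,
          integral_indicator hT, setIntegral_const, smul_eq_mul, smul_eq_mul, mul_comm η,
          mul_comm level, jumpOp]
    _ ≤ _ := by
        gcongr
        exact jumpOp_truncSq_le hr (mem_ball_iff_norm.1 hx).le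

theorem IsSubsolution.decay_on_ball [μ.IsNegInvariant]
    (hu : IsSubsolution μ Ω F M u) {a b ℓ : ℝ} (ha : 0 < a) (ha4 : a ≤ 1 / 4) (hℓ : 0 < ℓ)
    (hr : 0 < r) (hrδ : 2 * r ≤ δ) (huℓ : ∀ x ∈ ball p δ, u x ≤ ℓ) (hS : MeasurableSet S)
    (hSΩ : ∀ q ∈ S, q ∉ Ω) (hSb : ∀ x ∈ ball p r, b ≤ μ.real ((x + ·) ⁻¹' S))
    (hslack : a * ℓ * ∫ z, truncSq r z ∂μ + M * ∫ z, truncSq (δ / 2) z ∂μ + F < ℓ / 2 * b) :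
    ∀ x ∈ ball p (r / 2), u x ≤ (1 - a / 2) * ℓ := by
  by_contra! ⟨x₀, hx₀, hlt⟩
  set s := ℓ / 2 * b - (a * ℓ * ∫ z, truncSq r z ∂μ + M * ∫ z, truncSq (δ / 2) z ∂μ + F)
    with hs_def
  have : 0 < s := sub_pos.2 hslack
  have haℓ : 0 < a * ℓ := mul_pos ha hℓ
  set η := min (a * ℓ / 4) (s / (μ.real univ + 1))
  have hη : 0 < η := by positivity
  have hηm : η * (μ.real univ + 1) ≤ s := (le_div_iff₀ (by positivity)).1 (min_le_right _ _)
  obtain ⟨x, hxr, hux, hmax⟩ := exists_near_touching_of_lt ha ha4 hℓ hr (by linarith) huℓ hx₀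
    hlt hη (min_le_left _ _)
  have hxΩ : x ∈ Ω := by
    by_contra hxΩ
    linarith [hu.nonpos x hxΩ, mul_nonneg haℓ.le (truncSq_nonneg r (x - p))]
  have hjump := hu.jumpOp_le_of_near_touching hr hrδ hS hSΩ haℓ.le (half_pos hℓ).le hη.le hxr
    hux hmax
  have hmass : ℓ / 2 * b ≤ ℓ / 2 * μ.real ((x + ·) ⁻¹' S) := by gcongr; exact hSb x hxr
  linarith [hu.neg_jumpOp_le x hxΩ, hs_def]

end QuadraticBarrier

section PowerWeight

variable {E : Type*} [NormedAddCommGroup E] [NormedSpace ℝ E]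

lemma truncSq_mul_rpow_norm_eq {r : ℝ} (hr : 0 < r) (α : ℝ) (z : E) :
    truncSq r z * ‖z‖ ^ (-α)
      = r ^ (-α) * (truncSq 1 (r⁻¹ • z) * ‖r⁻¹ • z‖ ^ (-α)) := by
  have hrα : r ^ (-α) ≠ 0 := (Real.rpow_pos_of_pos hr _).ne'
  simp only [truncSq, norm_smul, norm_inv, Real.norm_of_nonneg hr.le, one_pow, mul_pow,
    inv_pow, Real.mul_rpow (inv_nonneg.2 hr.le) (norm_nonneg z), Real.inv_rpow hr.le,
    div_eq_inv_mul]
  field_simp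

variable [FiniteDimensional ℝ E] [MeasurableSpace E] [BorelSpace E] {μ : Measure E}
  [μ.IsAddHaarMeasure]

lemma integrable_truncSq_one_mul_rpow_norm [Nontrivial E] {α : ℝ}
    (hα : (Module.finrank ℝ E : ℝ) < α) (hα2 : α < Module.finrank ℝ E + 2) :
    Integrable (fun z : E => truncSq 1 z * ‖z‖ ^ (-α)) μ := by
  set d := Module.finrank ℝ E
  have hd : 1 ≤ d := Module.finrank_pos
  have hradial : ∀ y : ℝ, 0 < y → y ^ (d - 1) * y ^ (-α) = y ^ (d - 1 - α) := fun y hy => by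
    rw [← Real.rpow_natCast, Nat.cast_sub hd, Nat.cast_one, ← Real.rpow_add hy, sub_eq_add_neg _ α]
  simp only [truncSq, one_pow, div_one]
  rw [integrable_fun_norm_addHaar μ (f := fun y : ℝ => min 1 (y ^ 2) * y ^ (-α)),
    ← Ioc_union_Ioi_eq_Ioi (zero_le_one' ℝ)]
  refine IntegrableOn.union ?_ ?_
  · have hpow : IntegrableOn (fun y : ℝ => y ^ (d + 1 - α)) (Ioc 0 1) := by
      rw [← intervalIntegrable_iff_integrableOn_Ioc_of_le zero_le_one]
      exact intervalIntegral.intervalIntegrable_rpow' (by linarith)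
    refine hpow.congr_fun (fun y hy => ?_) measurableSet_Ioc
    have hmin : min 1 (y ^ 2) = y ^ (2 : ℝ) := by
      rw [min_eq_right (pow_le_one₀ hy.1.le hy.2), Real.rpow_two]
    simp only [smul_eq_mul]
    rw [hmin, mul_left_comm, hradial y hy.1, ← Real.rpow_add hy.1]
    ring_nf
  · have hpow : IntegrableOn (fun y : ℝ => y ^ (d - 1 - α)) (Ioi 1) :=
      integrableOn_Ioi_rpow_of_lt (by linarith) one_pos
    refine hpow.congr_fun (fun y hy => ?_) measurableSet_Ioi
    have hmin : min 1 (y ^ 2) = 1 := min_eq_left (one_le_pow₀ (mem_Ioi.1 hy).le)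
    simp only [smul_eq_mul]
    rw [hmin, one_mul, hradial y (one_pos.trans hy)]

lemma integrable_truncSq_mul_rpow_norm [Nontrivial E] {α r : ℝ}
    (hα : (Module.finrank ℝ E : ℝ) < α) (hα2 : α < Module.finrank ℝ E + 2) (hr : 0 < r) :
    Integrable (fun z : E => truncSq r z * ‖z‖ ^ (-α)) μ := by
  simp only [truncSq_mul_rpow_norm_eq hr]
  exact ((integrable_truncSq_one_mul_rpow_norm hα hα2).comp_smul
    (inv_ne_zero hr.ne')).const_mul _

lemma integral_truncSq_mul_rpow_norm (α : ℝ) {r : ℝ} (hr : 0 < r) :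
    ∫ z : E, truncSq r z * ‖z‖ ^ (-α) ∂μ
      = r ^ (Module.finrank ℝ E - α) * ∫ z : E, truncSq 1 z * ‖z‖ ^ (-α) ∂μ := by
  simp only [truncSq_mul_rpow_norm_eq hr]
  rw [integral_const_mul, Measure.integral_comp_inv_smul_of_nonneg μ
    (fun z : E => truncSq 1 z * ‖z‖ ^ (-α)) hr.le, smul_eq_mul, ← mul_assoc, ← Real.rpow_natCast,
    ← Real.rpow_add hr, neg_add_eq_sub]

end PowerWeight

section Kernel

variable {N : ℕ} {σ ε : ℝ}

lemma Kker_denom_pos (hε : 0 < ε) (z : EuclideanSpace ℝ (Fin N)) :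
    0 < ε ^ ((N : ℝ) + 2 * σ) + ‖z‖ ^ ((N : ℝ) + 2 * σ) := by positivity

lemma Kker_pos (hε : 0 < ε) (z : EuclideanSpace ℝ (Fin N)) : 0 < Kker N σ ε z :=
  one_div_pos.2 (Kker_denom_pos hε z)

lemma measurable_Kker : Measurable (Kker N σ ε) := by
  unfold Kker
  fun_prop

lemma Kker_neg (z : EuclideanSpace ℝ (Fin N)) : Kker N σ ε (-z) = Kker N σ ε z := by
  rw [Kker, Kker, norm_neg]

lemma Kker_le_Kker (hσ : 0 < σ) {ε' : ℝ} (hε : 0 < ε) (hεε' : ε ≤ ε')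
    (z : EuclideanSpace ℝ (Fin N)) : Kker N σ ε' z ≤ Kker N σ ε z := by
  unfold Kker
  gcongr

lemma Kker_le_rpow_norm (hε : 0 < ε) {z : EuclideanSpace ℝ (Fin N)} (hz : z ≠ 0) :
    Kker N σ ε z ≤ ‖z‖ ^ (-((N : ℝ) + 2 * σ)) := by
  have hz' : 0 < ‖z‖ := norm_pos_iff.2 hz
  rw [Kker, Real.rpow_neg hz'.le, ← one_div]
  gcongr
  exact le_add_of_nonneg_left (by positivity)

lemma one_div_le_Kker (hσ : 0 < σ) (hε : 0 < ε) {R : ℝ} (hεR : ε ≤ R)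
    {z : EuclideanSpace ℝ (Fin N)} (hz : ‖z‖ ≤ R) :
    1 / (2 * R ^ ((N : ℝ) + 2 * σ)) ≤ Kker N σ ε z := by
  rw [Kker, two_mul (R ^ _)]
  gcongr

lemma integrable_Kker (hσ : 0 < σ) (hε : 0 < ε) : Integrable (Kker N σ ε) := by
  set s := (N : ℝ) + 2 * σ with hs
  have : 0 < s := by positivity
  have hbound : Integrable fun z : EuclideanSpace ℝ (Fin N) =>
      (1 + 1 / ε) ^ s * (1 + ‖z‖) ^ (-s) := by
    refine (integrable_one_add_norm ?_).const_mul _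
    rw [finrank_euclideanSpace_fin]
    linarith
  refine hbound.mono' measurable_Kker.aestronglyMeasurable (.of_forall fun z => ?_)
  rw [Real.norm_of_nonneg (Kker_pos hε z).le, Kker, Real.rpow_neg (by positivity),
    ← div_eq_mul_inv, div_le_div_iff₀ (Kker_denom_pos hε z) (by positivity), one_mul, ← hs]
  have hε_max : 1 ≤ 1 / ε * max ε ‖z‖ := by
    rw [one_div_mul_eq_div, one_le_div hε]
    exact le_max_left _ _
  have hmax : max ε ‖z‖ ^ s ≤ ε ^ s + ‖z‖ ^ s := by
    rcases max_choice ε ‖z‖ with h | h <;> rw [h]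
    · exact le_add_of_nonneg_right (by positivity)
    · exact le_add_of_nonneg_left (by positivity)
  calc (1 + ‖z‖) ^ s ≤ ((1 + 1 / ε) * max ε ‖z‖) ^ s := by
        gcongr
        linarith [le_max_right ε ‖z‖]
    _ = (1 + 1 / ε) ^ s * max ε ‖z‖ ^ s := Real.mul_rpow (by positivity) (by positivity)
    _ ≤ (1 + 1 / ε) ^ s * (ε ^ s + ‖z‖ ^ s) := by gcongr

/-- The jump measure `K_ε(z) dz`. -/
def kernelMeasure (N : ℕ) (σ ε : ℝ) : Measure (EuclideanSpace ℝ (Fin N)) :=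
  volume.withDensity fun z => ENNReal.ofReal (Kker N σ ε z)

lemma integral_kernelMeasure (hε : 0 < ε) (g : EuclideanSpace ℝ (Fin N) → ℝ) :
    ∫ z, g z ∂kernelMeasure N σ ε = ∫ z, g z * Kker N σ ε z := by
  rw [kernelMeasure, integral_withDensity_eq_integral_toReal_smul measurable_Kker.ennreal_ofReal
    (.of_forall fun _ => ENNReal.ofReal_lt_top)]
  refine integral_congr_ae (.of_forall fun z => ?_)
  simp only [ENNReal.toReal_ofReal (Kker_pos hε z).le, smul_eq_mul, mul_comm]

lemma Iop_eq_jumpOp (hε : 0 < ε) : Iop N σ ε = jumpOp (kernelMeasure N σ ε) := by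
  ext u x
  rw [Iop, jumpOp, integral_kernelMeasure hε]

lemma isFiniteMeasure_kernelMeasure (hσ : 0 < σ) (hε : 0 < ε) :
    IsFiniteMeasure (kernelMeasure N σ ε) :=
  isFiniteMeasure_withDensity_ofReal (integrable_Kker hσ hε).2

lemma kernelMeasure_real_apply (hε : 0 < ε) {T : Set (EuclideanSpace ℝ (Fin N))}
    (hT : MeasurableSet T) : (kernelMeasure N σ ε).real T = ∫ z in T, Kker N σ ε z := by
  rw [measureReal_def, kernelMeasure, withDensity_apply _ hT, integral_eq_lintegral_of_nonneg_ae
    (.of_forall fun z => (Kker_pos hε z).le) measurable_Kker.aestronglyMeasurable]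

lemma kernelMeasure_le_kernelMeasure (hσ : 0 < σ) {ε' : ℝ} (hε : 0 < ε) (hεε' : ε ≤ ε') :
    kernelMeasure N σ ε' ≤ kernelMeasure N σ ε :=
  withDensity_mono (.of_forall fun z => ENNReal.ofReal_le_ofReal (Kker_le_Kker hσ hε hεε' z))

instance : (kernelMeasure N σ ε).IsNegInvariant where
  neg_eq_self := by
    ext T hT
    rw [Measure.neg_apply, kernelMeasure, withDensity_apply _ hT, withDensity_apply _ hT.neg,
      ← lintegral_indicator hT, ← lintegral_indicator hT.neg,
      ← lintegral_neg_eq_self (T.indicator _)]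
    refine lintegral_congr fun z => ?_
    simp only [indicator, Kker_neg]
    rfl

lemma exists_pos_le_kernelMeasure_compl_ball (hN : 1 ≤ N) (hσ : 0 < σ) (R : ℝ) :
    ∃ c > 0, ∀ ε ∈ Ioo (0 : ℝ) 1, c ≤ (kernelMeasure N σ ε).real (ball 0 R)ᶜ := by
  have : Nonempty (Fin N) := ⟨⟨0, hN⟩⟩
  have := isFiniteMeasure_kernelMeasure (N := N) hσ one_pos
  refine ⟨(kernelMeasure N σ 1).real (ball 0 R)ᶜ, ?_, fun ε hε => ?_⟩
  · obtain ⟨w, hw⟩ := NormedSpace.exists_lt_norm ℝ (EuclideanSpace ℝ (Fin N)) R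
    have hvol : volume (ball (0 : EuclideanSpace ℝ (Fin N)) R)ᶜ ≠ 0 := by
      refine ((isClosed_closedBall.isOpen_compl.measure_pos volume ⟨w, ?_⟩).trans_le
        (measure_mono (compl_subset_compl.2 ball_subset_closedBall))).ne'
      simpa using hw
    have hac : volume ≪ kernelMeasure N σ 1 :=
      withDensity_absolutelyContinuous' measurable_Kker.ennreal_ofReal.aemeasurable
        (.of_forall fun z => (ENNReal.ofReal_pos.2 (Kker_pos one_pos z)).ne')
    exact ENNReal.toReal_pos (fun h => hvol (hac h)) (measure_ne_top _ _)
  · have := isFiniteMeasure_kernelMeasure (N := N) hσ hε.1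
    exact ENNReal.toReal_mono (measure_ne_top _ _)
      (kernelMeasure_le_kernelMeasure hσ hε.1 hε.2.le _)

lemma exists_jump_out_of_bounded (hN : 1 ≤ N) (hσ : 0 < σ)
    {Ω : Set (EuclideanSpace ℝ (Fin N))} (hΩ : Bornology.IsBounded Ω) :
    ∃ T, MeasurableSet T ∧ (∀ x ∈ Ω, ∀ z ∈ T, x + z ∉ Ω) ∧
      ∃ c > 0, ∀ ε ∈ Ioo (0 : ℝ) 1, c ≤ (kernelMeasure N σ ε).real T := by
  refine ⟨(ball 0 (diam Ω + 1))ᶜ, measurableSet_ball.compl, fun x hx z hz hxz => hz ?_,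
    exists_pos_le_kernelMeasure_compl_ball hN hσ _⟩
  have hdist := dist_le_diam_of_mem hΩ hxz hx
  rw [dist_self_add_left] at hdist
  exact mem_ball_zero_iff.2 (by linarith)

lemma exists_integral_truncSq_kernelMeasure_le (hN : 1 ≤ N) (hσ : σ ∈ Ioo (0 : ℝ) 1) :
    ∃ C > 0, ∀ ε > 0, ∀ r > 0,
      ∫ z, truncSq r z ∂kernelMeasure N σ ε ≤ C * r ^ (-(2 * σ)) := by
  have : Nonempty (Fin N) := ⟨⟨0, hN⟩⟩
  set s := (N : ℝ) + 2 * σ with hs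
  have hd : Module.finrank ℝ (EuclideanSpace ℝ (Fin N)) = N := finrank_euclideanSpace_fin
  set I := ∫ z : EuclideanSpace ℝ (Fin N), truncSq 1 z * ‖z‖ ^ (-s)
  have hI : 0 ≤ I := integral_nonneg fun z => mul_nonneg (truncSq_nonneg 1 z) (by positivity)
  refine ⟨I + 1, by linarith, fun ε hε r hr => ?_⟩
  have hle : ∀ z, truncSq r z * Kker N σ ε z ≤ truncSq r z * ‖z‖ ^ (-s) := fun z => by
    rcases eq_or_ne z 0 with rfl | hz
    · simp [truncSq]
    · exact mul_le_mul_of_nonneg_left (Kker_le_rpow_norm hε hz) (truncSq_nonneg r z)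
  calc ∫ z, truncSq r z ∂kernelMeasure N σ ε
      ≤ ∫ z : EuclideanSpace ℝ (Fin N), truncSq r z * ‖z‖ ^ (-s) := by
        rw [integral_kernelMeasure hε]
        refine integral_mono_of_nonneg (.of_forall fun z => ?_)
          (integrable_truncSq_mul_rpow_norm ?_ ?_ hr) (.of_forall hle)
        · exact mul_nonneg (truncSq_nonneg r z) (Kker_pos hε z).le
        · rw [hd]
          linarith [hσ.1]
        · rw [hd]
          linarith [hσ.2]
    _ = r ^ (-(2 * σ)) * I := by
        rw [integral_truncSq_mul_rpow_norm s hr, hd, hs, sub_add_cancel_left]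
    _ ≤ (I + 1) * r ^ (-(2 * σ)) := by
        rw [mul_comm]
        gcongr
        linarith

lemma volume_real_div_le_kernelMeasure (hσ : 0 < σ) (hε : 0 < ε) {r : ℝ} (hεr : ε ≤ r)
    {p x : EuclideanSpace ℝ (Fin N)} {S : Set (EuclideanSpace ℝ (Fin N))}
    (hS : MeasurableSet S) (hSp : S ⊆ ball p r) (hx : x ∈ ball p r) :
    volume.real S / (2 * (2 * r) ^ ((N : ℝ) + 2 * σ))
      ≤ (kernelMeasure N σ ε).real ((x + ·) ⁻¹' S) := by
  have hT : MeasurableSet ((x + ·) ⁻¹' S) := measurable_const_add x hS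
  have hvol : volume ((x + ·) ⁻¹' S) = volume S := measure_preimage_add volume x S
  have hfin : volume ((x + ·) ⁻¹' S) ≠ ⊤ := by
    rw [hvol]
    exact ((measure_mono hSp).trans_lt measure_ball_lt_top).ne
  have hK : ∀ z ∈ (x + ·) ⁻¹' S, 1 / (2 * (2 * r) ^ ((N : ℝ) + 2 * σ)) ≤ Kker N σ ε z := by
    intro z hz
    refine one_div_le_Kker hσ hε (by linarith) ?_
    have hdist := dist_triangle_right (x + z) x p
    rw [dist_self_add_left] at hdist
    linarith [mem_ball.1 (hSp hz), mem_ball.1 hx]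
  have hle := setIntegral_ge_of_const_le hT hfin hK (integrable_Kker hσ hε).integrableOn
  rwa [← kernelMeasure_real_apply hε hT, measureReal_def, hvol, ← measureReal_def, smul_eq_mul,
    mul_one_div] at hle

lemma exists_Kker_le_mul_Kker (hσ : 0 < σ) {δ ρ : ℝ} (hδ : 0 < δ) (hρ : 0 < ρ) :
    ∃ τ > 0, ∀ ε, δ ≤ ε → ∀ v w : EuclideanSpace ℝ (Fin N), ‖v - w‖ < τ →
      Kker N σ ε v ≤ (1 + ρ) * Kker N σ ε w := by
  set s := (N : ℝ) + 2 * σ with hs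
  have hs0 : 0 < s := by positivity
  have h₁ : ∀ᶠ t in nhdsWithin (0 : ℝ) (Ioi 0), (1 + t) ^ s < 1 + ρ := by
    refine (ContinuousAt.eventually_lt (f := fun t : ℝ => (1 + t) ^ s) ?_ continuousAt_const
      (by simpa using hρ)).filter_mono nhdsWithin_le_nhds
    exact (continuousAt_const.add continuousAt_id).rpow_const (.inl (by norm_num))
  have h₂ : ∀ᶠ t in nhdsWithin (0 : ℝ) (Ioi 0), (2 * t) ^ s < ρ := by
    refine (ContinuousAt.eventually_lt (f := fun t : ℝ => (2 * t) ^ s) ?_ continuousAt_const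
      (by simpa [Real.zero_rpow hs0.ne'] using hρ)).filter_mono nhdsWithin_le_nhds
    exact (continuousAt_const.mul continuousAt_id).rpow_const (.inr hs0.le)
  obtain ⟨t, ⟨ht₁, ht₂⟩, ht0, htlt⟩ := ((h₁.and h₂).and (Ioo_mem_nhdsGT one_pos)).exists
  refine ⟨t ^ 2 * δ, by positivity, fun ε hε v w hvw => ?_⟩
  have hε0 : 0 < ε := hδ.trans_le hε
  have hw : ‖w‖ ≤ ‖v‖ + t ^ 2 * ε := by
    have : t ^ 2 * δ ≤ t ^ 2 * ε := by gcongr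
    linarith [norm_le_norm_add_norm_sub' w v, norm_sub_rev v w]
  -- Far from the origin compared with `ε` the ratio of the norms is close to `1`; near it, both
  -- norms are negligible against `ε`.
  have hws : ‖w‖ ^ s ≤ ρ * ε ^ s + (1 + ρ) * ‖v‖ ^ s := by
    rcases le_total (t * ε) ‖v‖ with hv | hv
    · calc ‖w‖ ^ s ≤ ((1 + t) * ‖v‖) ^ s := by gcongr; nlinarith
        _ = (1 + t) ^ s * ‖v‖ ^ s := Real.mul_rpow (by linarith) (norm_nonneg _)
        _ ≤ (1 + ρ) * ‖v‖ ^ s := by gcongr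
        _ ≤ _ := le_add_of_nonneg_left (by positivity)
    · calc ‖w‖ ^ s ≤ ((2 * t) * ε) ^ s := by gcongr; nlinarith [mul_pos ht0 hε0]
        _ = (2 * t) ^ s * ε ^ s := Real.mul_rpow (by linarith) hε0.le
        _ ≤ ρ * ε ^ s := by gcongr
        _ ≤ _ := le_add_of_nonneg_right (by positivity)
  rw [Kker, Kker, mul_one_div, div_le_div_iff₀ (Kker_denom_pos hε0 v) (Kker_denom_pos hε0 w),
    one_mul, ← hs]
  linarith

lemma exists_map_add_kernelMeasure_le (hσ : 0 < σ) {δ ρ : ℝ} (hδ : 0 < δ) (hρ : 0 < ρ) :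
    ∃ τ > 0, ∀ ε, δ ≤ ε → ∀ h : EuclideanSpace ℝ (Fin N), ‖h‖ < τ →
      (kernelMeasure N σ ε).map (h + ·)
        ≤ ENNReal.ofReal (1 + ρ) • kernelMeasure N σ ε := by
  obtain ⟨τ, hτ, hK⟩ := exists_Kker_le_mul_Kker (N := N) hσ hδ hρ
  refine ⟨τ, hτ, fun ε hε h hh => Measure.le_iff.2 fun T hT => ?_⟩
  have hhT : MeasurableSet ((h + ·) ⁻¹' T) := measurable_const_add h hT
  rw [Measure.map_apply (measurable_const_add h) hT, Measure.smul_apply, smul_eq_mul,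
    kernelMeasure, withDensity_apply _ hT, withDensity_apply _ hhT, ← lintegral_indicator hT,
    ← lintegral_indicator hhT, ← lintegral_add_left_eq_self (T.indicator _) h,
    ← lintegral_const_mul' _ _ ENNReal.ofReal_ne_top]
  refine lintegral_mono fun z => ?_
  by_cases hz : h + z ∈ T
  · rw [indicator_of_mem hz, indicator_of_mem (show z ∈ (h + ·) ⁻¹' T from hz),
      ← ENNReal.ofReal_mul (by linarith)]
    refine ENNReal.ofReal_le_ofReal (hK ε hε _ _ ?_)
    rwa [sub_add_cancel_right, norm_neg]
  · rw [indicator_of_notMem (show z ∉ (h + ·) ⁻¹' T from hz)]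
    exact zero_le

end Kernel

section Geometry

open scoped Topology

lemma nonempty_inter_frontier_of_isPreconnected {X : Type*} [TopologicalSpace X] {s t : Set X}
    (hs : IsPreconnected s) (hst : (s ∩ t).Nonempty) (hst' : (s ∩ tᶜ).Nonempty) :
    (s ∩ frontier t).Nonempty := by
  by_contra! hempty
  have hcover : s ⊆ interior t ∪ (closure t)ᶜ := fun y hy =>
    or_iff_not_imp_left.2 fun hint hcl => hempty.subset (show y ∈ s ∩ frontier t from
      ⟨hy, hcl, hint⟩)
  obtain ⟨a, has, hat⟩ := hst
  obtain ⟨b, hbs, hbt⟩ := hst'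
  obtain ⟨y, -, hyint, hycl⟩ := hs _ _ isOpen_interior isClosed_closure.isOpen_compl hcover
    ⟨a, has, (hcover has).resolve_right (not_not.2 (subset_closure hat))⟩
    ⟨b, hbs, (hcover hbs).resolve_left fun h => hbt (interior_subset h)⟩
  exact hycl (subset_closure (interior_subset hyint))

variable {N : ℕ} {Ω : Set (EuclideanSpace ℝ (Fin N))} {p q : EuclideanSpace ℝ (Fin N)}

/-- The complement of `Ω` has positive lower density at `p`: it fills a fixed fraction of every
small ball centred at `p`. This is all that the boundary estimate needs from the regularity of
`∂Ω`. -/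
def HasExteriorDensityAt (Ω : Set (EuclideanSpace ℝ (Fin N))) (p : EuclideanSpace ℝ (Fin N)) :
    Prop :=
  ∃ c > 0, ∀ᶠ r in 𝓝[>] (0 : ℝ), c * r ^ N ≤ volume.real (ball p r \ Ω)

lemma abs_sdist (Ω : Set (EuclideanSpace ℝ (Fin N))) (x : EuclideanSpace ℝ (Fin N)) :
    |sdist N Ω x| = infDist x (frontier Ω) := by
  unfold sdist
  split_ifs
  · exact abs_of_nonneg infDist_nonneg
  · rw [abs_neg, abs_of_nonneg infDist_nonneg]

lemma sdist_of_mem_frontier (hp : p ∈ frontier Ω) : sdist N Ω p = 0 := by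
  rw [← abs_eq_zero, abs_sdist, infDist_zero_of_mem hp]

lemma ball_subset_compl_of_sdist_lt {ρ : ℝ} (hρ : 0 < ρ) (hq : sdist N Ω q < -ρ) :
    ball q ρ ⊆ Ωᶜ := by
  intro y hy hyΩ
  have hqΩ : q ∉ Ω := fun h => by
    have : 0 ≤ sdist N Ω q := by
      rw [sdist, if_pos (subset_closure h)]
      exact infDist_nonneg
    linarith
  obtain ⟨w, hw, hwfr⟩ := nonempty_inter_frontier_of_isPreconnected
    (convex_ball q ρ).isPreconnected ⟨y, hy, hyΩ⟩ ⟨q, mem_ball_self hρ, hqΩ⟩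
  have habs := abs_sdist Ω q
  rw [abs_of_neg (by linarith)] at habs
  linarith [infDist_le_dist_of_mem (x := q) hwfr, mem_ball'.1 hw]

lemma contDiffAt_sdist {δ₀ : ℝ} (hC2 : HasC2Boundary N Ω δ₀) (hp : p ∈ frontier Ω) :
    ContDiffAt ℝ 2 (sdist N Ω) p := by
  refine hC2.2.2.contDiffAt ?_
  simp only [abs_sdist]
  refine (isOpen_lt (continuous_infDist_pt _) continuous_const).mem_nhds ?_
  simpa only [mem_ofPred_eq, infDist_zero_of_mem hp] using hC2.2.1

/-- If the derivative vanished, `d` would be `1/2`-Lipschitz near `p`; but `d` changes by the full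
distance between a point of `Ω` near `p` and its projection on `∂Ω`. -/
lemma fderiv_sdist_ne_zero (hΩ : IsOpen Ω) {δ₀ : ℝ} (hC2 : HasC2Boundary N Ω δ₀)
    (hp : p ∈ frontier Ω) : fderiv ℝ (sdist N Ω) p ≠ 0 := by
  intro hzero
  have hstrict := (contDiffAt_sdist hC2 hp).hasStrictFDerivAt two_ne_zero
  obtain ⟨s, hs, hLip⟩ :=
    hstrict.exists_lipschitzOnWith_of_nnnorm_lt (1 / 2) (by simp [hzero])
  obtain ⟨ρ, hρ, hball⟩ := Metric.mem_nhds_iff.1 hs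
  obtain ⟨x, hxΩ, hxp⟩ := Metric.mem_closure_iff.1 hp.1 (ρ / 2) (half_pos hρ)
  obtain ⟨w, hw, hxw⟩ := isClosed_frontier.exists_infDist_eq_dist ⟨p, hp⟩ x
  have hle : dist x w ≤ dist x p := hxw ▸ infDist_le_dist_of_mem hp
  rw [dist_comm] at hxp
  have hxs : x ∈ s := hball (mem_ball.2 (by linarith))
  have hws : w ∈ s := hball (mem_ball.2 (by linarith [dist_triangle_left w p x]))
  have hcontr : dist x w ≤ 1 / 2 * dist x w := by
    simpa [sdist_of_mem_frontier hw, Real.dist_eq, abs_sdist, hxw] using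
      hLip.dist_le_mul x hxs w hws
  have hpos : 0 < dist x w :=
    dist_pos.2 fun h => (disjoint_frontier_iff_isOpen.2 hΩ).le_bot ⟨hw, h ▸ hxΩ⟩
  linarith

lemma exists_direction_sdist_lt (hΩ : IsOpen Ω) {δ₀ : ℝ} (hC2 : HasC2Boundary N Ω δ₀)
    (hp : p ∈ frontier Ω) :
    ∃ v, ∃ m > 0, ∀ᶠ t in 𝓝[>] (0 : ℝ), sdist N Ω (p + t • v) < -(m * t) := by
  obtain ⟨v, hv⟩ : ∃ v, fderiv ℝ (sdist N Ω) p v < 0 := by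
    obtain ⟨v, hv⟩ := DFunLike.ne_iff.1 (fderiv_sdist_ne_zero hΩ hC2 hp)
    rcases lt_or_gt_of_ne hv with h | h
    · exact ⟨v, h⟩
    · exact ⟨-v, by simpa using h⟩
  refine ⟨v, -fderiv ℝ (sdist N Ω) p v / 2, by linarith, ?_⟩
  have hderiv : HasLineDerivAt ℝ (sdist N Ω) (fderiv ℝ (sdist N Ω) p v) p v :=
    ((contDiffAt_sdist hC2 hp).differentiableAt two_ne_zero).hasFDerivAt.hasLineDerivAt v
  filter_upwards [hderiv.tendsto_slope_zero_right.eventually_lt_const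
    (show _ < fderiv ℝ (sdist N Ω) p v / 2 by linarith), self_mem_nhdsWithin] with t ht ht0
  rw [sdist_of_mem_frontier hp, sub_zero, smul_eq_mul, inv_mul_lt_iff₀ ht0] at ht
  linarith

theorem hasExteriorDensityAt_of_hasC2Boundary (hΩ : IsOpen Ω) {δ₀ : ℝ}
    (hC2 : HasC2Boundary N Ω δ₀) (hp : p ∈ frontier Ω) : HasExteriorDensityAt Ω p := by
  obtain ⟨v, m, hm, hv⟩ := exists_direction_sdist_lt hΩ hC2 hp
  have hvm : 0 < ‖v‖ + m := by positivity
  set V := volume.real (ball (0 : EuclideanSpace ℝ (Fin N)) 1)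
  have hV : 0 < V := ENNReal.toReal_pos (measure_ball_pos _ _ one_pos).ne' measure_ball_lt_top.ne
  refine ⟨(m / (‖v‖ + m)) ^ N * V, by positivity, ?_⟩
  have hscale : Tendsto (fun r : ℝ => r / (‖v‖ + m)) (𝓝[>] 0) (𝓝[>] 0) :=
    tendsto_nhdsWithin_iff.2
      ⟨((continuous_id.div_const _).tendsto' 0 0 (zero_div _)).mono_left nhdsWithin_le_nhds,
        eventually_mem_nhdsWithin.mono fun r hr => div_pos hr hvm⟩
  filter_upwards [hscale.eventually hv, self_mem_nhdsWithin] with r hr hr0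
  set t := r / (‖v‖ + m) with ht
  have ht0 : 0 < t := div_pos hr0 hvm
  have hsub : ball (p + t • v) (m * t) ⊆ ball p r \ Ω := by
    refine subset_inter (ball_subset_ball' ?_)
      (ball_subset_compl_of_sdist_lt (mul_pos hm ht0) hr)
    rw [dist_self_add_left, norm_smul, Real.norm_of_nonneg ht0.le, add_comm (m * t), mul_comm m,
      ← mul_add, ht, div_mul_cancel₀ _ hvm.ne']
  calc (m / (‖v‖ + m)) ^ N * V * r ^ N = (m * t) ^ N * V := by rw [ht]; ring
    _ = volume.real (ball (p + t • v) (m * t)) := by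
        rw [measureReal_def, Measure.addHaar_ball_of_pos _ _ (mul_pos hm ht0), ENNReal.toReal_mul,
          ENNReal.toReal_ofReal (by positivity), finrank_euclideanSpace_fin, ← measureReal_def]
    _ ≤ volume.real (ball p r \ Ω) :=
        measureReal_mono hsub ((measure_mono sdiff_subset).trans_lt measure_ball_lt_top).ne

end Geometry

section BoundaryLayer

open scoped Topology

variable {N : ℕ} {σ : ℝ} {Ω : Set (EuclideanSpace ℝ (Fin N))} {p : EuclideanSpace ℝ (Fin N)}

lemma HasExteriorDensityAt.exists_kernelMeasure_ge (hp : HasExteriorDensityAt Ω p)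
    (hσ : 0 < σ) (hΩ : MeasurableSet Ω) :
    ∃ c > 0, ∀ᶠ r in 𝓝[>] (0 : ℝ), ∀ ε ∈ Ioc 0 r, ∀ x ∈ ball p r,
      c * r ^ (-(2 * σ)) ≤ (kernelMeasure N σ ε).real ((x + ·) ⁻¹' (ball p r \ Ω)) := by
  obtain ⟨c, hc, hdens⟩ := hp
  refine ⟨c / (2 * 2 ^ ((N : ℝ) + 2 * σ)), by positivity, ?_⟩
  filter_upwards [hdens, self_mem_nhdsWithin] with r hr hr0 ε hε x hx
  have hr0 : 0 < r := hr0
  calc c / (2 * 2 ^ ((N : ℝ) + 2 * σ)) * r ^ (-(2 * σ))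
      = c * r ^ N / (2 * (2 * r) ^ ((N : ℝ) + 2 * σ)) := by
        rw [Real.mul_rpow zero_le_two hr0.le, Real.rpow_neg hr0.le, Real.rpow_add hr0,
          Real.rpow_natCast]
        field_simp
    _ ≤ volume.real (ball p r \ Ω) / (2 * (2 * r) ^ ((N : ℝ) + 2 * σ)) := by gcongr
    _ ≤ _ := volume_real_div_le_kernelMeasure hσ hε.1 hε.2 (measurableSet_ball.diff hΩ)
        sdiff_subset hx

/-- Near `p` the jumps into the complement have rate `≳ r ^ (-2σ)`, which beats both the rate
`a * r ^ (-2σ)` paid by the barrier, for `a` small, and the bounded rate of jumps beyond `δ`. -/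
lemma HasExteriorDensityAt.exists_decay_factor (hp : HasExteriorDensityAt Ω p) (hN : 1 ≤ N)
    (hσ : σ ∈ Ioo (0 : ℝ) 1) (hΩ : MeasurableSet Ω) :
    ∃ γ ∈ Ioo (0 : ℝ) 1, ∀ F M ℓ δ : ℝ, 0 < ℓ → 0 < δ → ∃ δ' > 0, ∀ ε ∈ Ioo 0 δ', ∀ u,
      IsSubsolution (kernelMeasure N σ ε) Ω F M u → (∀ x ∈ ball p δ, u x ≤ ℓ) →
        ∀ x ∈ ball p δ', u x ≤ γ * ℓ := by
  obtain ⟨C, hC, hCle⟩ := exists_integral_truncSq_kernelMeasure_le hN hσ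
  obtain ⟨c, hc, hcle⟩ := hp.exists_kernelMeasure_ge hσ.1 hΩ
  set a := min (1 / 4) (c / (4 * C))
  have ha : 0 < a := by positivity
  have ha4 : a ≤ 1 / 4 := min_le_left _ _
  have haC : a * C ≤ c / 4 := by
    calc a * C ≤ c / (4 * C) * C := by gcongr; exact min_le_right _ _
      _ = c / 4 := by field_simp
  refine ⟨1 - a / 2, ⟨by linarith, by linarith⟩, fun F M ℓ δ hℓ hδ => ?_⟩
  have hlarge : Tendsto (fun r : ℝ => ℓ * (c / 4) * r ^ (-(2 * σ))) (𝓝[>] 0) atTop :=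
    (tendsto_rpow_neg_nhdsGT_zero (by linarith [hσ.1])).const_mul_atTop (by positivity)
  obtain ⟨r, ⟨hmass, hrlarge⟩, hr, hrδ⟩ := ((hcle.and (hlarge.eventually_gt_atTop
    (M * (C * (δ / 2) ^ (-(2 * σ))) + F))).and (Ioo_mem_nhdsGT (half_pos hδ))).exists
  refine ⟨r / 2, half_pos hr, fun ε hε u hu huℓ => ?_⟩
  have := isFiniteMeasure_kernelMeasure (N := N) hσ.1 hε.1
  have hM : 0 ≤ M := (abs_nonneg _).trans (hu.abs_le p)
  refine hu.decay_on_ball ha ha4 hℓ hr (by linarith) huℓ (measurableSet_ball.diff hΩ)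
    (fun q hq => hq.2) (hmass ε ⟨hε.1, by linarith [hε.2]⟩) ?_
  calc a * ℓ * ∫ z, truncSq r z ∂kernelMeasure N σ ε
        + M * ∫ z, truncSq (δ / 2) z ∂kernelMeasure N σ ε + F
      ≤ a * ℓ * (C * r ^ (-(2 * σ))) + M * (C * (δ / 2) ^ (-(2 * σ))) + F := by
        gcongr
        exacts [hCle ε hε.1 r hr, hCle ε hε.1 _ (half_pos hδ)]
    _ < a * ℓ * (C * r ^ (-(2 * σ))) + ℓ * (c / 4) * r ^ (-(2 * σ)) := by
        rw [add_assoc]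
        gcongr
    _ = (a * C) * (ℓ * r ^ (-(2 * σ))) + ℓ * (c / 4) * r ^ (-(2 * σ)) := by ring
    _ ≤ c / 4 * (ℓ * r ^ (-(2 * σ))) + ℓ * (c / 4) * r ^ (-(2 * σ)) := by gcongr
    _ = ℓ / 2 * (c * r ^ (-(2 * σ))) := by ring

lemma HasExteriorDensityAt.exists_le_pow_mul (hp : HasExteriorDensityAt Ω p) (hN : 1 ≤ N)
    (hσ : σ ∈ Ioo (0 : ℝ) 1) (hΩ : MeasurableSet Ω) :
    ∃ γ ∈ Ioo (0 : ℝ) 1, ∀ (F M : ℝ) (n : ℕ), ∃ δ > 0, ∀ ε ∈ Ioo 0 δ, ∀ u,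
      IsSubsolution (kernelMeasure N σ ε) Ω F M u →
        ∀ x ∈ ball p δ, u x ≤ γ ^ n * (|M| + 1) := by
  obtain ⟨γ, hγ, hdecay⟩ := hp.exists_decay_factor hN hσ hΩ
  refine ⟨γ, hγ, fun F M n => ?_⟩
  induction n with
  | zero =>
    refine ⟨1, one_pos, fun ε _ u hu x _ => ?_⟩
    rw [pow_zero, one_mul]
    linarith [le_of_abs_le (hu.abs_le x), le_abs_self M]
  | succ n ih =>
    obtain ⟨δ, hδ, hle⟩ := ih
    have hlevel : 0 < γ ^ n * (|M| + 1) := mul_pos (pow_pos hγ.1 n) (by positivity)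
    obtain ⟨δ', hδ', hle'⟩ := hdecay F M _ δ hlevel hδ
    refine ⟨min δ δ', lt_min hδ hδ', fun ε hε u hu x hx => ?_⟩
    rw [pow_succ', mul_assoc]
    exact hle' ε ⟨hε.1, hε.2.trans_le (min_le_right _ _)⟩ u hu
      (hle ε ⟨hε.1, hε.2.trans_le (min_le_left _ _)⟩ u hu) x
      (ball_subset_ball (min_le_right _ _) hx)

lemma HasExteriorDensityAt.eventually_le (hp : HasExteriorDensityAt Ω p) (hN : 1 ≤ N)
    (hσ : σ ∈ Ioo (0 : ℝ) 1) (hΩ : MeasurableSet Ω) (F M : ℝ) {η : ℝ} (hη : 0 < η) :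
    ∀ᶠ εx : ℝ × EuclideanSpace ℝ (Fin N) in 𝓝[>] 0 ×ˢ 𝓝 p,
      ∀ u, IsSubsolution (kernelMeasure N σ εx.1) Ω F M u → u εx.2 ≤ η := by
  obtain ⟨γ, hγ, hle⟩ := hp.exists_le_pow_mul hN hσ hΩ
  have hM : 0 < |M| + 1 := by positivity
  obtain ⟨n, hn⟩ := exists_pow_lt_of_lt_one (div_pos hη hM) hγ.2
  obtain ⟨δ, hδ, hδle⟩ := hle F M n
  filter_upwards [prod_mem_prod (Ioo_mem_nhdsGT hδ) (ball_mem_nhds p hδ)] with εx hεx u hu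
  exact (hδle _ hεx.1 u hu _ hεx.2).trans ((lt_div_iff₀ hM).1 hn).le

theorem exists_forall_isSubsolution_le_of_dist_lt (hN : 1 ≤ N) (hσ : σ ∈ Ioo (0 : ℝ) 1)
    (hΩ : MeasurableSet Ω) (hΩb : Bornology.IsBounded Ω)
    (hdens : ∀ p ∈ frontier Ω, HasExteriorDensityAt Ω p) (F M : ℝ) {η : ℝ} (hη : 0 < η) :
    ∃ δ > 0, ∀ ε ∈ Ioo 0 δ, ∀ u, IsSubsolution (kernelMeasure N σ ε) Ω F M u →
      ∀ x, ∀ y ∉ Ω, dist x y < δ → u x ≤ η := by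
  have hK : IsCompact (frontier Ω) := isCompact_of_isClosed_isBounded isClosed_frontier
    (hΩb.closure.subset frontier_subset_closure)
  have hmem := hK.mem_prod_nhdsSet_of_forall fun p hp =>
    (hdens p hp).eventually_le hN hσ hΩ F M hη
  obtain ⟨⟨δ₁, δ₂⟩, ⟨hδ₁, hδ₂⟩, hsub⟩ :=
    ((nhdsGT_basis (0 : ℝ)).prod (hasBasis_nhdsSet_thickening hK)).mem_iff.1 hmem
  refine ⟨min δ₁ δ₂, lt_min hδ₁ hδ₂, fun ε hε u hu x y hy hxy => ?_⟩
  by_cases hx : x ∈ Ω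
  · obtain ⟨w, hw, hwfr⟩ := nonempty_inter_frontier_of_isPreconnected
      (convex_ball x δ₂).isPreconnected ⟨x, mem_ball_self hδ₂, hx⟩
      ⟨y, mem_ball'.2 (hxy.trans_le (min_le_right _ _)), hy⟩
    exact hsub (show (ε, x) ∈ Ioo 0 δ₁ ×ˢ thickening δ₂ (frontier Ω) from
      ⟨⟨hε.1, hε.2.trans_le (min_le_left _ _)⟩, mem_thickening_iff.2 ⟨w, hwfr, mem_ball'.1 hw⟩⟩)
      u hu
  · exact (hu.nonpos x hx).trans hη.le

end BoundaryLayer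

section Modulus

lemma uniformEquicontinuousOn_iff_dist {ι X Y : Type*} [PseudoMetricSpace X]
    [PseudoMetricSpace Y] {g : ι → X → Y} {s : Set X} :
    UniformEquicontinuousOn g s ↔ ∀ η > 0, ∃ τ > 0, ∀ i, ∀ x ∈ s, ∀ y ∈ s,
      dist x y < τ → dist (g i x) (g i y) < η := by
  rw [(uniformity_basis_dist.inf_principal _).uniformEquicontinuousOn_iff uniformity_basis_dist]
  refine forall₂_congr fun η _ => exists_congr fun τ => and_congr_right fun _ => ?_
  exact ⟨fun h i x hx y hy hxy => h x y ⟨hxy, hx, hy⟩ i,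
    fun h x y ⟨hxy, hx, hy⟩ i => h i x hx y hy hxy⟩

variable {X : Type*} [PseudoMetricSpace X] {𝓕 : Set (X → ℝ)} {s : Set X} {t η M : ℝ}

/-- The largest oscillation `|u x - u y|` of the functions `u ∈ 𝓕` over points `x, y ∈ s` at
distance at most `t`; it is `0` by convention where these oscillations are unbounded. -/
def oscillationOn (𝓕 : Set (X → ℝ)) (s : Set X) (t : ℝ) : ℝ :=
  sSup {a | ∃ u ∈ 𝓕, ∃ x ∈ s, ∃ y ∈ s, dist x y ≤ t ∧ |u x - u y| = a}

lemma oscillationOn_nonneg : 0 ≤ oscillationOn 𝓕 s t :=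
  Real.sSup_nonneg fun _ ⟨_, _, _, _, _, _, _, ha⟩ => ha ▸ abs_nonneg _

lemma oscillationOn_le (hη : 0 ≤ η)
    (h : ∀ u ∈ 𝓕, ∀ x ∈ s, ∀ y ∈ s, dist x y ≤ t → |u x - u y| ≤ η) :
    oscillationOn 𝓕 s t ≤ η :=
  Real.sSup_le (fun _ ⟨u, hu, x, hx, y, hy, hxy, ha⟩ => ha ▸ h u hu x hx y hy hxy) hη

lemma abs_sub_le_oscillationOn (hM : ∀ u ∈ 𝓕, ∀ x ∈ s, |u x| ≤ M) {u : X → ℝ} (hu : u ∈ 𝓕)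
    {x y : X} (hx : x ∈ s) (hy : y ∈ s) (hxy : dist x y ≤ t) :
    |u x - u y| ≤ oscillationOn 𝓕 s t := by
  refine le_csSup ⟨M + M, ?_⟩ ⟨u, hu, x, hx, y, hy, hxy, rfl⟩
  rintro _ ⟨u, hu, x, hx, y, hy, -, rfl⟩
  exact (abs_sub _ _).trans (add_le_add (hM u hu x hx) (hM u hu y hy))

lemma exists_oscillationOn_le (h : 𝓕.UniformEquicontinuousOn s) (hη : 0 < η) :
    ∃ τ > 0, ∀ t < τ, oscillationOn 𝓕 s t ≤ η := by
  obtain ⟨τ, hτ, hle⟩ := uniformEquicontinuousOn_iff_dist.1 h η hη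
  exact ⟨τ, hτ, fun t ht => oscillationOn_le hη.le fun u hu x hx y hy hxy =>
    (hle ⟨u, hu⟩ x hx y hy (hxy.trans_lt ht)).le⟩

theorem exists_isModulus_of_uniformEquicontinuousOn (h : 𝓕.UniformEquicontinuousOn s)
    (hM : ∀ u ∈ 𝓕, ∀ x ∈ s, |u x| ≤ M) :
    ∃ m, IsModulus m ∧ ∀ u ∈ 𝓕, ∀ x ∈ s, ∀ y ∈ s, |u x - u y| ≤ m (dist x y) := by
  have hzero : oscillationOn 𝓕 s 0 = 0 := by
    refine le_antisymm (le_of_forall_pos_le_add fun η hη => ?_) oscillationOn_nonneg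
    obtain ⟨τ, hτ, hle⟩ := exists_oscillationOn_le h hη
    exact (hle 0 hτ).trans_eq (zero_add η).symm
  refine ⟨oscillationOn 𝓕 s, ⟨fun _ => oscillationOn_nonneg, fun t _ t' _ htt' => ?_, hzero, ?_⟩,
    fun u hu x hx y hy => abs_sub_le_oscillationOn hM hu hx hy le_rfl⟩
  · exact oscillationOn_le oscillationOn_nonneg fun u hu x hx y hy hxy =>
      abs_sub_le_oscillationOn hM hu hx hy (hxy.trans htt')
  · refine continuousAt_iff.2 fun η hη => ?_
    obtain ⟨τ, hτ, hle⟩ := exists_oscillationOn_le h (half_pos hη)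
    refine ⟨τ, hτ, fun {t} ht => ?_⟩
    rw [dist_zero_right] at ht
    rw [hzero, dist_zero_right, Real.norm_of_nonneg oscillationOn_nonneg]
    exact (hle t ((le_abs_self t).trans_lt ht)).trans_lt (half_lt_self hη)

end Modulus

section Equicontinuity

variable {N : ℕ} {σ ε : ℝ} {Ω : Set (EuclideanSpace ℝ (Fin N))}
  {f u : EuclideanSpace ℝ (Fin N) → ℝ} {F M : ℝ}

lemma IsSolution.neg (hu : IsSolution N σ Ω f ε u) (hε : 0 < ε) :
    IsSolution N σ Ω (-f) ε (-u) := by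
  obtain ⟨hmeas, ⟨C, hC⟩, hcont, hzero, heq⟩ := hu
  refine ⟨hmeas.neg, ⟨C, fun x => (abs_neg (u x)).trans_le (hC x)⟩, hcont.neg,
    fun x hx => neg_eq_zero.2 (hzero x hx), fun x hx => ?_⟩
  rw [Pi.neg_apply, ← heq x hx, Iop_eq_jumpOp hε, jumpOp_neg]

lemma IsSolution.isSubsolution (hu : IsSolution N σ Ω f ε u) (hε : 0 < ε)
    (hF : ∀ x ∈ Ω, f x ≤ F) (hM : ∀ x, |u x| ≤ M) :
    IsSubsolution (kernelMeasure N σ ε) Ω F M u := by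
  obtain ⟨hmeas, -, -, hzero, heq⟩ := hu
  refine ⟨hmeas, hM, fun x hx => (hzero x hx).le, fun x hx => ?_⟩
  rw [← Iop_eq_jumpOp hε, heq x hx]
  exact hF x hx

lemma IsSolution.isSubsolution_neg (hu : IsSolution N σ Ω f ε u) (hε : 0 < ε)
    (hF : ∀ x ∈ Ω, |f x| ≤ F) (hM : ∀ x, |u x| ≤ M) :
    IsSubsolution (kernelMeasure N σ ε) Ω F M (-u) :=
  (hu.neg hε).isSubsolution hε (fun x hx => (neg_le_abs (f x)).trans (hF x hx))
    fun x => (abs_neg (u x)).trans_le (hM x)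

lemma exists_forall_isSolution_abs_le (hN : 1 ≤ N) (hσ : 0 < σ) (hΩb : Bornology.IsBounded Ω)
    (hF : ∀ x ∈ Ω, |f x| ≤ F) :
    ∃ M, ∀ ε ∈ Ioo (0 : ℝ) 1, ∀ u, IsSolution N σ Ω f ε u → ∀ x, |u x| ≤ M := by
  obtain ⟨T, hT, hΩT, c, hc, hcT⟩ := exists_jump_out_of_bounded hN hσ hΩb
  have hF' : ∀ x ∈ Ω, |f x| ≤ |F| := fun x hx => (hF x hx).trans (le_abs_self F)
  refine ⟨|F| / c, fun ε hε u hu x => ?_⟩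
  obtain ⟨C, hC⟩ := hu.2.1
  have := isFiniteMeasure_kernelMeasure (N := N) hσ hε.1
  have hsub := hu.isSubsolution hε.1 (fun x hx => (le_abs_self (f x)).trans (hF' x hx)) hC
  have hneg := hu.isSubsolution_neg hε.1 hF' hC
  exact abs_le'.2 ⟨hsub.le_div (abs_nonneg F) hT hc (hcT ε hε) hΩT x,
    hneg.le_div (abs_nonneg F) hT hc (hcT ε hε) hΩT x⟩

lemma exists_forall_isSolution_abs_le_of_dist_lt (hN : 1 ≤ N) (hσ : σ ∈ Ioo (0 : ℝ) 1)
    (hΩ : MeasurableSet Ω) (hΩb : Bornology.IsBounded Ω)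
    (hdens : ∀ p ∈ frontier Ω, HasExteriorDensityAt Ω p) (hF : ∀ x ∈ Ω, |f x| ≤ F)
    {η : ℝ} (hη : 0 < η) :
    ∃ δ > 0, ∀ ε ∈ Ioo (0 : ℝ) 1, ε < δ → ∀ u, IsSolution N σ Ω f ε u →
      ∀ x, ∀ y ∉ Ω, dist x y < δ → |u x| ≤ η := by
  obtain ⟨M, hM⟩ := exists_forall_isSolution_abs_le hN hσ.1 hΩb hF
  obtain ⟨δ, hδ, hle⟩ := exists_forall_isSubsolution_le_of_dist_lt hN hσ hΩ hΩb hdens F M hη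
  refine ⟨δ, hδ, fun ε hε hεδ u hu x y hy hxy => abs_le'.2 ⟨?_, ?_⟩⟩
  · exact hle ε ⟨hε.1, hεδ⟩ u (hu.isSubsolution hε.1
      (fun x hx => (le_abs_self (f x)).trans (hF x hx)) (hM ε hε u hu)) x y hy hxy
  · exact hle ε ⟨hε.1, hεδ⟩ (-u) (hu.isSubsolution_neg hε.1 hF (hM ε hε u hu)) x y hy hxy

lemma exists_forall_isSolution_sub_le_of_lt (hN : 1 ≤ N) (hσ : σ ∈ Ioo (0 : ℝ) 1)
    (hΩ : MeasurableSet Ω) (hΩb : Bornology.IsBounded Ω)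
    (hdens : ∀ p ∈ frontier Ω, HasExteriorDensityAt Ω p) (hF : ∀ x ∈ Ω, |f x| ≤ F)
    (hf : UniformContinuousOn f Ω) {η : ℝ} (hη : 0 < η) :
    ∃ δ > 0, ∀ ε ∈ Ioo (0 : ℝ) 1, ε < δ → ∀ u, IsSolution N σ Ω f ε u →
      ∀ x y, dist x y < δ → u x - u y ≤ η := by
  obtain ⟨T, hT, hΩT, c, hc, hcT⟩ := exists_jump_out_of_bounded hN hσ.1 hΩb
  obtain ⟨δ, hδ, hbdry⟩ :=
    exists_forall_isSolution_abs_le_of_dist_lt hN hσ hΩ hΩb hdens hF (half_pos hη)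
  obtain ⟨τ, hτ, hfτ⟩ := uniformContinuousOn_iff.1 hf (c * (η / 2)) (by positivity)
  refine ⟨min δ τ, lt_min hδ hτ, fun ε hε hεδ u hu x y hxy => ?_⟩
  have := isFiniteMeasure_kernelMeasure (N := N) hσ.1 hε.1
  obtain ⟨hmeas, ⟨C, hC⟩, -, hzero, heq⟩ := id hu
  have hshift : ∀ a, dist (a + (x - y)) a < min δ τ := fun a => by
    rwa [dist_self_add_left, ← dist_eq_norm]
  have hbdry' := hbdry ε hε (hεδ.trans_le (min_le_left _ _)) u hu
  have hexit : ∀ a, a ∉ Ω ∨ a + (x - y) ∉ Ω → u (a + (x - y)) - u a ≤ η / 2 := by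
    rintro a (ha | ha)
    · rw [hzero a ha, sub_zero]
      exact (le_abs_self _).trans (hbdry' _ a ha ((hshift a).trans_le (min_le_left _ _)))
    · rw [hzero _ ha, zero_sub]
      exact (neg_le_abs _).trans
        (hbdry' a _ ha ((dist_comm _ _).trans_lt ((hshift a).trans_le (min_le_left _ _))))
  have hinterior : ∀ a ∈ Ω, a + (x - y) ∈ Ω →
      jumpOp (kernelMeasure N σ ε) u a - jumpOp (kernelMeasure N σ ε) u (a + (x - y))
        ≤ c * (η / 2) := fun a ha hah => by
    have hfa := (hfτ _ hah a ha ((hshift a).trans_le (min_le_right _ _))).le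
    rw [Real.dist_eq, ← heq a ha, ← heq _ hah, Iop_eq_jumpOp hε.1] at hfa
    linarith [le_of_abs_le hfa]
  have hle := translate_sub_le_add_div hmeas hC hT (by positivity) (half_pos hη).le hc
    (hcT ε hε) hΩT hzero hexit hinterior y
  rwa [add_sub_cancel, mul_div_cancel_left₀ _ hc.ne', add_halves] at hle

lemma exists_forall_isSolution_sub_le_of_ge (hN : 1 ≤ N) (hσ : 0 < σ)
    (hΩb : Bornology.IsBounded Ω) (hF : ∀ x ∈ Ω, |f x| ≤ F) (hf : UniformContinuousOn f Ω)
    {δ η : ℝ} (hδ : 0 < δ) (hη : 0 < η) :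
    ∃ τ > 0, ∀ ε ∈ Ioo (0 : ℝ) 1, δ ≤ ε → ∀ u, IsSolution N σ Ω f ε u →
      ∀ x ∈ Ω, ∀ y ∈ Ω, dist x y < τ → u x - u y ≤ η := by
  obtain ⟨T, -, -, c, hc, hcT⟩ := exists_jump_out_of_bounded hN hσ hΩb
  obtain ⟨M, hM⟩ := exists_forall_isSolution_abs_le hN hσ hΩb hF
  set ρ := η / (4 * (|M| + 1)) with hρ
  obtain ⟨τ, hτ, hmap⟩ := exists_map_add_kernelMeasure_le (N := N) (ρ := ρ) hσ hδ (by positivity)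
  obtain ⟨τ', hτ', hfτ⟩ := uniformContinuousOn_iff.1 hf (c * (η / 2)) (by positivity)
  refine ⟨min τ τ', lt_min hτ hτ', fun ε hε hδε u hu x hx y hy hxy => ?_⟩
  have := isFiniteMeasure_kernelMeasure (N := N) hσ hε.1
  have hjump : |jumpOp (kernelMeasure N σ ε) u x - jumpOp (kernelMeasure N σ ε) u y|
      ≤ c * (η / 2) := by
    have hfxy := (hfτ x hx y hy (hxy.trans_le (min_le_right _ _))).le
    rwa [Real.dist_eq, ← hu.2.2.2.2 x hx, ← hu.2.2.2.2 y hy, Iop_eq_jumpOp hε.1, neg_sub_neg,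
      abs_sub_comm] at hfxy
  have hle := sub_le_of_map_le hu.1 (fun a => (hM ε hε u hu a).trans (le_abs_self M)) hc
    ((hcT ε hε).trans (measureReal_mono (subset_univ T))) (by positivity)
    (hmap ε hδε _ (dist_eq_norm x y ▸ hxy.trans_le (min_le_left _ _))) hjump
  have hMρ : 2 * |M| * ρ ≤ η / 2 := calc
    2 * |M| * ρ ≤ 2 * (|M| + 1) * ρ := by gcongr; linarith
    _ = η / 2 := by rw [hρ]; field_simp; norm_num
  rw [mul_div_cancel_left₀ _ hc.ne'] at hle
  linarith

/-- The solutions of the Dirichlet problem `-I_ε[u] = f` in `Ω`, `u = 0` off `Ω`, for all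
`ε ∈ (0, 1)` together. -/
def solutionFamily (N : ℕ) (σ : ℝ) (Ω : Set (EuclideanSpace ℝ (Fin N)))
    (f : EuclideanSpace ℝ (Fin N) → ℝ) : Set (EuclideanSpace ℝ (Fin N) → ℝ) :=
  {u | ∃ ε ∈ Ioo (0 : ℝ) 1, IsSolution N σ Ω f ε u}

theorem uniformEquicontinuousOn_solutionFamily (hN : 1 ≤ N) (hσ : σ ∈ Ioo (0 : ℝ) 1)
    (hΩ : MeasurableSet Ω) (hΩb : Bornology.IsBounded Ω)
    (hdens : ∀ p ∈ frontier Ω, HasExteriorDensityAt Ω p) (hF : ∀ x ∈ Ω, |f x| ≤ F)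
    (hf : UniformContinuousOn f Ω) : (solutionFamily N σ Ω f).UniformEquicontinuousOn Ω := by
  refine uniformEquicontinuousOn_iff_dist.2 fun η hη => ?_
  obtain ⟨δ, hδ, hsmall⟩ :=
    exists_forall_isSolution_sub_le_of_lt hN hσ hΩ hΩb hdens hF hf (half_pos hη)
  obtain ⟨τ, hτ, hlarge⟩ :=
    exists_forall_isSolution_sub_le_of_ge hN hσ.1 hΩb hF hf hδ (half_pos hη)
  have hle : ∀ u ∈ solutionFamily N σ Ω f, ∀ x ∈ Ω, ∀ y ∈ Ω, dist x y < min δ τ →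
      u x - u y ≤ η / 2 := by
    rintro u ⟨ε, hε, hu⟩ x hx y hy hxy
    rcases lt_or_ge ε δ with hεδ | hδε
    · exact hsmall ε hε hεδ u hu x y (hxy.trans_le (min_le_left _ _))
    · exact hlarge ε hε hδε u hu x hx y hy (hxy.trans_le (min_le_right _ _))
  refine ⟨min δ τ, lt_min hδ hτ, fun u x hx y hy hxy => ?_⟩
  exact (abs_sub_le_iff.2 ⟨hle u u.2 x hx y hy hxy,
    hle u u.2 y hy x hx (dist_comm x y ▸ hxy)⟩).trans_lt (half_lt_self hη)

end Equicontinuity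

theorem statement0_general (N : ℕ) (hN : 1 ≤ N) (σ : ℝ) (hσ : σ ∈ Ioo (0 : ℝ) 1)
    (Ω : Set (EuclideanSpace ℝ (Fin N))) (hΩ : MeasurableSet Ω) (hΩb : Bornology.IsBounded Ω)
    (hdens : ∀ p ∈ frontier Ω, HasExteriorDensityAt Ω p)
    (f : EuclideanSpace ℝ (Fin N) → ℝ) (hf : ContinuousOn f (closure Ω)) :
    ∃ m : ℝ → ℝ, IsModulus m ∧
      ∀ ε ∈ Ioo (0 : ℝ) 1, ∀ u : EuclideanSpace ℝ (Fin N) → ℝ,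
        IsSolution N σ Ω f ε u →
          ∀ x ∈ Ω, ∀ y ∈ Ω, |u x - u y| ≤ m ‖x - y‖ := by
  have hK : IsCompact (closure Ω) := hΩb.isCompact_closure
  obtain ⟨F, hF⟩ := hK.exists_bound_of_continuousOn hf
  have hFΩ : ∀ x ∈ Ω, |f x| ≤ F := fun x hx => hF x (subset_closure hx)
  have hfΩ : UniformContinuousOn f Ω :=
    (hK.uniformContinuousOn_of_continuous hf).mono subset_closure
  obtain ⟨M, hM⟩ := exists_forall_isSolution_abs_le hN hσ.1 hΩb hFΩ
  obtain ⟨m, hm, hle⟩ := exists_isModulus_of_uniformEquicontinuousOn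
    (uniformEquicontinuousOn_solutionFamily hN hσ hΩ hΩb hdens hFΩ hfΩ)
    (fun u ⟨ε, hε, hu⟩ x _ => hM ε hε u hu x)
  refine ⟨m, hm, fun ε hε u hu x hx y hy => ?_⟩
  exact dist_eq_norm x y ▸ hle u ⟨ε, hε, hu⟩ x hx y hy

/-- uniform (in `ε`) modulus of continuity in `Ω` for solutions of the
Dirichlet problem. -/
theorem statement0 (N : ℕ) (hN : 1 ≤ N) (σ : ℝ) (hσ : σ ∈ Set.Ioo (0 : ℝ) 1)
    (Ω : Set (EuclideanSpace ℝ (Fin N))) (hΩo : IsOpen Ω) (hΩb : Bornology.IsBounded Ω)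
    (hC2 : ∃ δ₀, HasC2Boundary N Ω δ₀)
    (f : EuclideanSpace ℝ (Fin N) → ℝ) (hf : ContinuousOn f (closure Ω)) :
    ∃ m : ℝ → ℝ, IsModulus m ∧
      ∀ ε ∈ Set.Ioo (0 : ℝ) 1, ∀ u : EuclideanSpace ℝ (Fin N) → ℝ,
        IsSolution N σ Ω f ε u →
          ∀ x ∈ Ω, ∀ y ∈ Ω, |u x - u y| ≤ m ‖x - y‖ :=
  let ⟨_, hC2⟩ := hC2
  statement0_general N hN σ hσ Ω hΩo.measurableSet hΩb
    (fun _ hp => hasExteriorDensityAt_of_hasC2Boundary hΩo hC2 hp) f hf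
end
end

section
/- (Comparison principle) Let Ω ⊂ ℝ^N be a nonempty bounded open set, let J : ℝ^N → [0,∞) be integrable and satisfy the exterior mass condition with constant ν₀ > 0, and let f : Ω̄ → ℝ be bounded. Let u, v : ℝ^N → ℝ be bounded measurable functions such that u is upper semicontinuous on Ω̄, v is lower semicontinuous on Ω̄, −I_J[u](x) ≤ f(x) and −I_J[v](x) ≥ f(x) for every x ∈ Ω̄, and u ≤ v on (Ω̄)ᶜ. Then u ≤ v on Ω̄. -/
open MeasureTheory Metric Set Filter

noncomputable section

/-- The nonlocal operator `I_J[u](x) = ∫ (u(x+z) - u(x)) J(z) dz` associated to an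
integrable kernel `J`. -/
def IopJ (N : ℕ) (J u : EuclideanSpace ℝ (Fin N) → ℝ)
    (x : EuclideanSpace ℝ (Fin N)) : ℝ :=
  ∫ z, (u (x + z) - u x) * J z

/-- The exterior mass condition with constant `ν₀`:
`∫_{Ωᶜ - x} J(z) dz ≥ ν₀` for every `x ∈ Ω̄`. -/
def ExtMass (N : ℕ) (Ω : Set (EuclideanSpace ℝ (Fin N)))
    (J : EuclideanSpace ℝ (Fin N) → ℝ) (ν₀ : ℝ) : Prop :=
  ∀ x ∈ closure Ω, ν₀ ≤ ∫ z in {z | x + z ∉ Ω}, J z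

/-!
By linearity the difference `w = u - v` satisfies `0 ≤ I[w]` on the compact set `K = closure Ω`.
Suppose that `w` has a positive maximum over `K`; it is then a global maximum, and at each point `x`
where it is attained the integrand of `I[w](x)` is nonpositive, so `w (x + z) = w x` for almost
every jump `z`. Hence the compact set of maximum points is stable under translation by every `z` in
the support of the jump measure. The exterior mass condition at a point of `Ω` provides such a
`z ≠ 0`, but no nonempty compact set is stable under a nonzero translation: a continuous linear
functional that is positive on `z` has no maximum on it.
-/

/-- The nonlocal operator of a jump measure `ν`, which replaces the kernel `J` of `IopJ` (the case
`ν = J dz`). The measure may be infinite, so the integrand need not be integrable even for bounded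
`u`; the value is then `0`. -/
def jumpOperator {E : Type*} [Add E] [MeasurableSpace E] (ν : Measure E) (u : E → ℝ) (x : E) : ℝ :=
  ∫ z, (u (x + z) - u x) ∂ν

section JumpOperator

variable {E : Type*} [Add E] [MeasurableSpace E] {ν : Measure E} {u v w : E → ℝ} {x : E}

theorem jumpOperator_sub (hu : Integrable (fun z ↦ u (x + z) - u x) ν)
    (hv : Integrable (fun z ↦ v (x + z) - v x) ν) :
    jumpOperator ν (u - v) x = jumpOperator ν u x - jumpOperator ν v x := by
  simp only [jumpOperator, Pi.sub_apply, sub_sub_sub_comm, integral_sub hu hv]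

theorem integrable_add_left_sub_of_bounded [MeasurableAdd E] [IsFiniteMeasure ν]
    (hw : Measurable w) (hb : ∃ C, ∀ y, |w y| ≤ C) (x : E) :
    Integrable (fun z ↦ w (x + z) - w x) ν := by
  obtain ⟨C, hC⟩ := hb
  exact (Integrable.of_bound (hw.comp (measurable_const_add x)).aestronglyMeasurable C
    (.of_forall fun z ↦ hC (x + z))).sub (integrable_const _)

theorem ae_add_left_eq_of_forall_le_of_jumpOperator_nonneg
    (hint : Integrable (fun z ↦ w (x + z) - w x) ν) (hmax : ∀ z, w (x + z) ≤ w x)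
    (hI : 0 ≤ jumpOperator ν w x) : ∀ᵐ z ∂ν, w (x + z) = w x := by
  have hnonpos (z : E) : w (x + z) - w x ≤ 0 := sub_nonpos.2 (hmax z)
  have hzero : jumpOperator ν w x = ∫ _, (0 : ℝ) ∂ν := by
    rw [integral_zero]
    exact (integral_nonpos hnonpos).antisymm hI
  filter_upwards [(integral_eq_iff_of_ae_le hint (integrable_zero E ℝ ν)
    (.of_forall hnonpos)).1 hzero] with z hz
  exact sub_eq_zero.1 hz

end JumpOperator

theorem eq_zero_of_isCompact_of_forall_add_mem {E : Type*} [AddCommGroup E] [TopologicalSpace E]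
    [Module ℝ E] [SeparatingDual ℝ E] {A : Set E} (hA : IsCompact A) (hne : A.Nonempty) {z : E}
    (hz : ∀ x ∈ A, x + z ∈ A) : z = 0 := by
  by_contra hz0
  obtain ⟨φ, hφ⟩ := SeparatingDual.exists_eq_one (R := ℝ) hz0
  obtain ⟨a, ha, hmax⟩ := hA.exists_isMaxOn hne φ.continuous.continuousOn
  have hle : φ (a + z) ≤ φ a := hmax (hz a ha)
  rw [map_add, hφ] at hle
  linarith

section Comparison

variable {E : Type*} [AddCommGroup E] [TopologicalSpace E] [ContinuousAdd E] [Module ℝ E]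
  [SeparatingDual ℝ E] [HereditarilyLindelofSpace E] [MeasurableSpace E] {ν : Measure E}
  {K : Set E}

theorem nonpos_of_jumpOperator_nonneg (hν : ν {0}ᶜ ≠ 0) (hK : IsCompact K) {w : E → ℝ}
    (hint : ∀ x ∈ K, Integrable (fun z ↦ w (x + z) - w x) ν) (husc : UpperSemicontinuousOn w K)
    (hI : ∀ x ∈ K, 0 ≤ jumpOperator ν w x) (hout : ∀ x ∉ K, w x ≤ 0) :
    ∀ x ∈ K, w x ≤ 0 := by
  by_contra! ⟨y, hy, hwy⟩
  obtain ⟨m, hm, hmax⟩ := husc.exists_isMaxOn ⟨y, hy⟩ hK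
  have hpos : 0 < w m := hwy.trans_le (hmax hy)
  have hle (x : E) : w x ≤ w m := by
    by_cases hx : x ∈ K
    · exact hmax hx
    · exact (hout x hx).trans hpos.le
  set A := K ∩ w ⁻¹' Ici (w m)
  have hA : IsCompact A := husc.isCompact_inter_preimage_Ici hK (w m)
  have hae : ∀ x ∈ A, ∀ᵐ z ∂ν, x + z ∈ A := by
    rintro x ⟨hx, hmx⟩
    filter_upwards [ae_add_left_eq_of_forall_le_of_jumpOperator_nonneg (hint x hx)
      (fun z ↦ (hle _).trans hmx) (hI x hx)] with z hz
    have hmz : w m ≤ w (x + z) := hz ▸ hmx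
    exact ⟨by_contra fun hxz ↦ (hpos.trans_le hmz).not_ge (hout _ hxz), hmz⟩
  obtain ⟨z, hz0, hz⟩ := Measure.nonempty_inter_support_of_pos (pos_iff_ne_zero.2 hν)
  have : T2Space E := SeparatingDual.t2Space (R := ℝ)
  have hstable (x : E) (hx : x ∈ A) : x + z ∈ A :=
    Measure.support_subset_of_isClosed (hA.isClosed.preimage (continuous_const_add x)) (hae x hx) hz
  exact hz0 (eq_zero_of_isCompact_of_forall_add_mem hA ⟨m, hm, le_refl (w m)⟩ hstable)

theorem statement5_general (hν : ν {0}ᶜ ≠ 0) (hK : IsCompact K) {u v : E → ℝ}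
    (hu_int : ∀ x ∈ K, Integrable (fun z ↦ u (x + z) - u x) ν)
    (hv_int : ∀ x ∈ K, Integrable (fun z ↦ v (x + z) - v x) ν)
    (husc : UpperSemicontinuousOn u K) (hvsc : LowerSemicontinuousOn v K)
    (hI : ∀ x ∈ K, -jumpOperator ν u x ≤ -jumpOperator ν v x) (hout : ∀ x ∉ K, u x ≤ v x) :
    ∀ x ∈ K, u x ≤ v x := by
  have hsub_usc : UpperSemicontinuousOn (u - v) K := by
    rw [sub_eq_add_neg]
    exact husc.add hvsc.neg
  have hsub_int (x : E) (hx : x ∈ K) : Integrable (fun z ↦ (u - v) (x + z) - (u - v) x) ν := by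
    simp only [Pi.sub_apply, sub_sub_sub_comm]
    exact (hu_int x hx).sub (hv_int x hx)
  have hsub_I (x : E) (hx : x ∈ K) : 0 ≤ jumpOperator ν (u - v) x := by
    rw [jumpOperator_sub (hu_int x hx) (hv_int x hx)]
    exact sub_nonneg.2 (neg_le_neg_iff.1 (hI x hx))
  intro x hx
  exact sub_nonpos.1 (nonpos_of_jumpOperator_nonneg hν hK hsub_int hsub_usc hsub_I
    (fun y hy ↦ sub_nonpos.2 (hout y hy)) x hx)

end Comparison

section Kernel

variable {N : ℕ} {J : EuclideanSpace ℝ (Fin N) → ℝ}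

theorem IopJ_eq_jumpOperator_withDensity (hJ0 : ∀ z, 0 ≤ J z) (hJ : AEMeasurable J)
    (u : EuclideanSpace ℝ (Fin N) → ℝ) :
    IopJ N J u = jumpOperator (volume.withDensity fun z ↦ ENNReal.ofReal (J z)) u := by
  funext x
  rw [jumpOperator, integral_withDensity_eq_integral_toReal_smul₀ hJ.ennreal_ofReal
    (.of_forall fun z ↦ ENNReal.ofReal_lt_top)]
  simp only [IopJ, ENNReal.toReal_ofReal (hJ0 _), smul_eq_mul, mul_comm]

theorem ExtMass.withDensity_compl_zero_ne_zero {Ω : Set (EuclideanSpace ℝ (Fin N))} {ν₀ : ℝ}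
    (hext : ExtMass N Ω J ν₀) (hJ0 : ∀ z, 0 ≤ J z) (hJint : Integrable J) (hΩ : Ω.Nonempty)
    (hν₀ : 0 < ν₀) :
    (volume.withDensity fun z ↦ ENNReal.ofReal (J z)) {0}ᶜ ≠ 0 := by
  obtain ⟨x, hx⟩ := hΩ
  have hsubset : {z | x + z ∉ Ω} ⊆ ({0}ᶜ : Set (EuclideanSpace ℝ (Fin N))) := by
    rintro z hz rfl
    exact hz (by rwa [add_zero])
  have hpos : 0 < ∫ z in {z | x + z ∉ Ω}, J z := hν₀.trans_le (hext x (subset_closure hx))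
  have hmass : 0 < (volume.withDensity fun z ↦ ENNReal.ofReal (J z)) {z | x + z ∉ Ω} := by
    rw [withDensity_apply' _ _, ← ofReal_integral_eq_lintegral_ofReal hJint.integrableOn
      (.of_forall hJ0)]
    exact ENNReal.ofReal_pos.2 hpos
  exact (hmass.trans_le (measure_mono hsubset)).ne'

end Kernel

/-- comparison principle. -/
theorem statement5 (N : ℕ) (hN : 1 ≤ N)
    (Ω : Set (EuclideanSpace ℝ (Fin N))) (hΩo : IsOpen Ω) (hΩb : Bornology.IsBounded Ω)
    (hΩne : Ω.Nonempty)
    (J : EuclideanSpace ℝ (Fin N) → ℝ) (hJ0 : ∀ z, 0 ≤ J z) (hJint : Integrable J)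
    (ν₀ : ℝ) (hν₀ : 0 < ν₀) (hext : ExtMass N Ω J ν₀)
    (f : EuclideanSpace ℝ (Fin N) → ℝ) (hfb : ∃ C, ∀ x ∈ closure Ω, |f x| ≤ C)
    (u v : EuclideanSpace ℝ (Fin N) → ℝ)
    (hum : Measurable u) (hub : ∃ C, ∀ x, |u x| ≤ C)
    (hvm : Measurable v) (hvb : ∃ C, ∀ x, |v x| ≤ C)
    (husc : UpperSemicontinuousOn u (closure Ω))
    (hvsc : LowerSemicontinuousOn v (closure Ω))
    (hu : ∀ x ∈ closure Ω, -IopJ N J u x ≤ f x)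
    (hv : ∀ x ∈ closure Ω, f x ≤ -IopJ N J v x)
    (huv : ∀ x ∉ closure Ω, u x ≤ v x) :
    ∀ x ∈ closure Ω, u x ≤ v x := by
  have := isFiniteMeasure_withDensity_ofReal hJint.2
  simp only [IopJ_eq_jumpOperator_withDensity hJ0 hJint.aemeasurable] at hu hv
  exact statement5_general (hext.withDensity_compl_zero_ne_zero hJ0 hJint hΩne hν₀)
    hΩb.isCompact_closure
    (fun x _ ↦ integrable_add_left_sub_of_bounded hum hub x)
    (fun x _ ↦ integrable_add_left_sub_of_bounded hvm hvb x)
    husc hvsc (fun x hx ↦ (hu x hx).trans (hv x hx)) huv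
end
end

section
/- Let Ω ⊂ ℝ^N be a bounded open set, J : ℝ^N → [0,∞) integrable, f ∈ C(Ω̄), and let u : ℝ^N → ℝ be a bounded measurable function satisfying −I_J[u](x) ≤ f(x) for every x ∈ Ω. Let x₀ ∈ ∂Ω and suppose there exists a sequence (x_k) ⊂ Ω such that x_k → x₀, u(x_k) → u(x₀), and limsup_{k→∞} u(x_k + z) ≤ u(x₀ + z) for almost every z ∈ ℝ^N. Then −I_J[u](x₀) ≤ f(x₀). -/
open MeasureTheory Metric Set Filter

noncomputable section

/-! Replacing `u (x_k + z)` by `max (u (x_k + z)) (u (x₀ + z))` turns the one-sided hypothesis on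
the limsup into convergence, so dominated convergence yields a reverse Fatou inequality
`limsup I_J[u](x_k) ≤ I_J[u](x₀)`. Since `-f (x_k) ≤ I_J[u](x_k)` and `f (x_k) → f x₀`, the
left-hand side is at least `-f x₀`. -/

section Limsup

variable {ι : Type*} {l : Filter ι}

lemma tendsto_max_of_limsup_le {R : Type*} [ConditionallyCompleteLinearOrder R]
    [TopologicalSpace R] [OrderTopology R] {a : ι → R} {s : R}
    (ha : l.IsBoundedUnder (· ≤ ·) a) (hs : limsup a l ≤ s) :
    Tendsto (fun i => max (a i) s) l (nhds s) := by
  refine tendsto_order.2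
    ⟨fun r hr => .of_forall fun i => hr.trans_le (le_max_right _ _), fun r hr => ?_⟩
  filter_upwards [eventually_lt_of_limsup_lt (hs.trans_lt hr) ha] with i hi
  exact max_lt hi hr

variable [l.NeBot]

lemma limsup_sub_mul_le {a b : ι → ℝ} {s t c : ℝ}
    (ha_above : l.IsBoundedUnder (· ≤ ·) a) (ha_below : l.IsBoundedUnder (· ≥ ·) a)
    (ha : limsup a l ≤ s) (hb : Tendsto b l (nhds t)) (hc : 0 ≤ c) :
    limsup (fun i => (a i - b i) * c) l ≤ (s - t) * c := by
  have hmax : Tendsto (fun i => (max (a i) s - b i) * c) l (nhds ((s - t) * c)) :=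
    ((tendsto_max_of_limsup_le ha_above ha).sub hb).mul_const c
  obtain ⟨m, hm⟩ := ha_below.eventually_ge
  obtain ⟨M, hM⟩ := hb.isBoundedUnder_le.eventually_le
  have hbelow : ∀ᶠ i in l, (m - M) * c ≤ (a i - b i) * c := by
    filter_upwards [hm, hM] with i hmi hMi
    gcongr
  refine (limsup_le_limsup (.of_forall fun i => ?_)
    (isCoboundedUnder_le_of_eventually_le l hbelow) hmax.isBoundedUnder_le).trans_eq hmax.limsup_eq
  gcongr
  exact le_max_left _ _

lemma limsup_integral_le_of_dominated [l.IsCountablyGenerated] {α : Type*} [MeasurableSpace α]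
    {μ : Measure α} {F : ι → α → ℝ} {g bound : α → ℝ} (hF : ∀ i, AEStronglyMeasurable (F i) μ)
    (hbound : Integrable bound μ) (hF_le : ∀ᵐ z ∂μ, ∀ i, |F i z| ≤ bound z)
    (hg : Integrable g μ) (hlimsup : ∀ᵐ z ∂μ, limsup (fun i => F i z) l ≤ g z) :
    limsup (fun i => ∫ z, F i z ∂μ) l ≤ ∫ z, g z ∂μ := by
  have hF_le' (i : ι) : ∀ᵐ z ∂μ, ‖F i z‖ ≤ bound z := hF_le.mono fun z hz => hz i
  have hF_int (i : ι) : Integrable (F i) μ := hbound.mono' (hF i) (hF_le' i)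
  have hmax : Tendsto (fun i => ∫ z, max (F i z) (g z) ∂μ) l (nhds (∫ z, g z ∂μ)) := by
    refine tendsto_integral_filter_of_dominated_convergence (fun z => max (bound z) |g z|)
      (.of_forall fun i => ((hF_int i).sup hg).aestronglyMeasurable) (.of_forall fun i => ?_)
      (hbound.sup hg.abs) ?_
    · filter_upwards [hF_le' i] with z hz
      exact abs_max_le_max_abs_abs.trans (max_le_max_right _ hz)
    · filter_upwards [hF_le, hlimsup] with z hz hlim
      exact tendsto_max_of_limsup_le (isBoundedUnder_of ⟨bound z, fun i => le_of_abs_le (hz i)⟩)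
        hlim
  have hbelow (i : ι) : -∫ z, bound z ∂μ ≤ ∫ z, F i z ∂μ :=
    neg_le_of_abs_le (norm_integral_le_of_norm_le hbound (hF_le' i))
  refine (limsup_le_limsup (.of_forall fun i => ?_)
    (isCoboundedUnder_le_of_eventually_le l (.of_forall hbelow)) hmax.isBoundedUnder_le).trans_eq
    hmax.limsup_eq
  exact integral_mono (hF_int i) ((hF_int i).sup hg) fun z => le_max_left _ _

end Limsup

/-- The nonlocal operator `I_J[u](x) = ∫ (u (x + z) - u x) J(z) dμ(z)` on an arbitrary additive
structure with a measure; on `EuclideanSpace ℝ (Fin N)` with `volume` it is `IopJ N`. -/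
def nonlocalOp {G : Type*} [Add G] [MeasurableSpace G] (μ : Measure G) (J u : G → ℝ) (x : G) : ℝ :=
  ∫ z, (u (x + z) - u x) * J z ∂μ

section NonlocalOp

variable {G : Type*} [Add G] {J u : G → ℝ} {C : ℝ}

lemma abs_sub_mul_kernel_le (hC : ∀ x, |u x| ≤ C) (x z : G) :
    |(u (x + z) - u x) * J z| ≤ (C + C) * |J z| := by
  rw [abs_mul]
  gcongr
  exact (abs_sub _ _).trans (add_le_add (hC _) (hC _))

variable [MeasurableSpace G] {μ : Measure G}

lemma abs_nonlocalOp_le (hJ : Integrable J μ) (hC : ∀ x, |u x| ≤ C) (x : G) :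
    |nonlocalOp μ J u x| ≤ ∫ z, (C + C) * |J z| ∂μ := by
  rw [nonlocalOp, ← Real.norm_eq_abs]
  exact norm_integral_le_of_norm_le (hJ.abs.const_mul _) (.of_forall (abs_sub_mul_kernel_le hC x))

variable [MeasurableAdd G]

lemma aestronglyMeasurable_sub_mul_kernel (hJ : AEStronglyMeasurable J μ) (hu : Measurable u)
    (x : G) : AEStronglyMeasurable (fun z => (u (x + z) - u x) * J z) μ :=
  ((hu.comp (measurable_const_add x)).sub_const _).aestronglyMeasurable.mul hJ

lemma integrable_sub_mul_kernel (hJ : Integrable J μ) (hu : Measurable u) (hC : ∀ x, |u x| ≤ C)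
    (x : G) : Integrable (fun z => (u (x + z) - u x) * J z) μ :=
  (hJ.abs.const_mul (C + C)).mono'
    (aestronglyMeasurable_sub_mul_kernel hJ.aestronglyMeasurable hu x)
    (.of_forall (abs_sub_mul_kernel_le hC x))

variable {ι : Type*} {l : Filter ι} [l.NeBot] [l.IsCountablyGenerated] {x₀ : G} {x : ι → G}

lemma limsup_nonlocalOp_le (hJ : Integrable J μ) (hJ_nonneg : 0 ≤ᵐ[μ] J) (hu : Measurable u)
    (hC : ∀ x, |u x| ≤ C) (hux : Tendsto (fun i => u (x i)) l (nhds (u x₀)))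
    (hlimsup : ∀ᵐ z ∂μ, limsup (fun i => u (x i + z)) l ≤ u (x₀ + z)) :
    limsup (fun i => nonlocalOp μ J u (x i)) l ≤ nonlocalOp μ J u x₀ := by
  refine limsup_integral_le_of_dominated
    (fun i => aestronglyMeasurable_sub_mul_kernel hJ.aestronglyMeasurable hu (x i))
    (hJ.abs.const_mul (C + C)) (.of_forall fun z i => abs_sub_mul_kernel_le hC (x i) z)
    (integrable_sub_mul_kernel hJ hu hC x₀) ?_
  filter_upwards [hlimsup, hJ_nonneg] with z hz hJz
  exact limsup_sub_mul_le (isBoundedUnder_of ⟨C, fun i => le_of_abs_le (hC _)⟩)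
    (isBoundedUnder_of ⟨-C, fun i => neg_le_of_abs_le (hC _)⟩) hz hux hJz

theorem statement7_general [TopologicalSpace G] {Ω : Set G} {f : G → ℝ} (hJ : Integrable J μ)
    (hJ_nonneg : 0 ≤ᵐ[μ] J) (hu : Measurable u) (hC : ∀ x, |u x| ≤ C)
    (hf : ContinuousWithinAt f Ω x₀) (hsub : ∀ x ∈ Ω, -nonlocalOp μ J u x ≤ f x)
    (hxΩ : ∀ i, x i ∈ Ω) (hx : Tendsto x l (nhds x₀))
    (hux : Tendsto (fun i => u (x i)) l (nhds (u x₀)))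
    (hlimsup : ∀ᵐ z ∂μ, limsup (fun i => u (x i + z)) l ≤ u (x₀ + z)) :
    -nonlocalOp μ J u x₀ ≤ f x₀ := by
  have hfx : Tendsto (fun i => -f (x i)) l (nhds (-f x₀)) :=
    (hf.tendsto.comp (tendsto_nhdsWithin_iff.2 ⟨hx, .of_forall hxΩ⟩)).neg
  have hbdd : l.IsBoundedUnder (· ≤ ·) fun i => nonlocalOp μ J u (x i) :=
    isBoundedUnder_of ⟨_, fun i => le_of_abs_le (abs_nonlocalOp_le hJ hC (x i))⟩
  refine neg_le.1 ?_
  calc -f x₀ = limsup (fun i => -f (x i)) l := hfx.limsup_eq.symm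
    _ ≤ limsup (fun i => nonlocalOp μ J u (x i)) l :=
      limsup_le_limsup (.of_forall fun i => neg_le.1 (hsub _ (hxΩ i))) hfx.isCoboundedUnder_le hbdd
    _ ≤ nonlocalOp μ J u x₀ := limsup_nonlocalOp_le hJ hJ_nonneg hu hC hux hlimsup

end NonlocalOp

/-- the subsolution inequality extends to boundary points along
suitable sequences. -/
theorem statement7 (N : ℕ) (hN : 1 ≤ N)
    (Ω : Set (EuclideanSpace ℝ (Fin N))) (hΩo : IsOpen Ω) (hΩb : Bornology.IsBounded Ω)
    (J : EuclideanSpace ℝ (Fin N) → ℝ) (hJ0 : ∀ z, 0 ≤ J z) (hJint : Integrable J)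
    (f : EuclideanSpace ℝ (Fin N) → ℝ) (hf : ContinuousOn f (closure Ω))
    (u : EuclideanSpace ℝ (Fin N) → ℝ)
    (hum : Measurable u) (hub : ∃ C, ∀ x, |u x| ≤ C)
    (hu : ∀ x ∈ Ω, -IopJ N J u x ≤ f x)
    (x₀ : EuclideanSpace ℝ (Fin N)) (hx₀ : x₀ ∈ frontier Ω)
    (xk : ℕ → EuclideanSpace ℝ (Fin N)) (hxk : ∀ k, xk k ∈ Ω)
    (hxkconv : Filter.Tendsto xk Filter.atTop (nhds x₀))
    (huconv : Filter.Tendsto (fun k => u (xk k)) Filter.atTop (nhds (u x₀)))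
    (hlimsup : ∀ᵐ z : EuclideanSpace ℝ (Fin N),
      Filter.limsup (fun k => u (xk k + z)) Filter.atTop ≤ u (x₀ + z)) :
    -IopJ N J u x₀ ≤ f x₀ := by
  obtain ⟨C, hC⟩ := hub
  exact statement7_general hJint (.of_forall hJ0) hum hC
    ((hf x₀ (frontier_subset_closure hx₀)).mono subset_closure) hu hxk hxkconv huconv hlimsup
end
end

section
/- Let Ω ⊂ ℝ^N be a nonempty bounded open set, let J : ℝ^N → [0,∞) be integrable and satisfy the exterior mass condition with constant ν₀ > 0, and let f ∈ C(Ω̄). Then there exists a unique bounded function u : ℝ^N → ℝ which is continuous on Ω̄, satisfies u = 0 on (Ω̄)ᶜ, and satisfies −I_J[u](x) = f(x) for every x ∈ Ω̄. -/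
open MeasureTheory Metric Set Filter

noncomputable section

/-!
Write `ν = J dz`, `M = ν(ℝᴺ)` and `K = closure Ω`. On `K` the equation is the fixed point problem
`u x = M⁻¹ (∫ u (x + z) dν(z) + f x)` for the extension of `u` by zero. Although `u` jumps across
`∂K`, the integral is continuous in `x`, because translation is continuous in `L¹` and `ν` has a
density.

Since `∂Ω` may carry mass, a walk with jump law `ν / M` may be unable to leave `K` in a single step,
so the map need not contract the sup norm. But `ν` charges some half-space `{l ≤ φ}`, even
with `e^l ν{l ≤ φ} ≥ 2M` once `φ` and `l` are multiplied by a large constant, and then the barrier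
`w = 1 - exp (min (φ - s) 0)` satisfies `∫ w (x + z) dν(z) ≤ θ M w x` on `K` with `θ < 1`. Hence
the map contracts the norm `sup_K |u| / w`.
-/

open scoped ENNReal NNReal

theorem existsUnique_isFixedPt_of_weighted_contraction {X F : Type*} [TopologicalSpace X]
    [CompactSpace X] [NormedAddCommGroup F] [NormedSpace ℝ F] [CompleteSpace F]
    {w : C(X, ℝ)} (hw : ∀ x, 0 < w x) {θ : ℝ≥0} (hθ : θ < 1) {T : C(X, F) → C(X, F)}
    (hT : ∀ u v c, 0 ≤ c → (∀ x, ‖u x - v x‖ ≤ c * w x) → ∀ x, ‖T u x - T v x‖ ≤ θ * c * w x) :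
    ∃! u, Function.IsFixedPt T u := by
  let w' : C(X, ℝ) := ⟨fun x => (w x)⁻¹, w.continuous.inv₀ fun x => (hw x).ne'⟩
  let rescale : C(X, F) ≃ C(X, F) :=
    { toFun := fun v => w • v
      invFun := fun u => w' • u
      left_inv := fun v => by ext x; simp [w', inv_smul_smul₀ (hw x).ne']
      right_inv := fun u => by ext x; simp [w', smul_inv_smul₀ (hw x).ne'] }
  have h_contracting : ContractingWith θ (rescale.symm ∘ T ∘ rescale) := by
    refine ⟨hθ, LipschitzWith.of_dist_le_mul fun u v => ?_⟩
    rw [ContinuousMap.dist_le (by positivity)]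
    intro x
    have h_rescale (y : X) : ‖rescale u y - rescale v y‖ ≤ dist u v * w y := by
      change ‖w y • u y - w y • v y‖ ≤ _
      rw [← smul_sub, norm_smul, Real.norm_of_nonneg (hw y).le, mul_comm, ← dist_eq_norm]
      exact mul_le_mul_of_nonneg_right (ContinuousMap.dist_apply_le_dist y) (hw y).le
    change dist ((w x)⁻¹ • T (rescale u) x) ((w x)⁻¹ • T (rescale v) x) ≤ _
    rw [dist_eq_norm, ← smul_sub, norm_smul, norm_inv, Real.norm_of_nonneg (hw x).le,
      inv_mul_le_iff₀ (hw x), mul_comm (w x)]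
    exact hT _ _ _ dist_nonneg h_rescale x
  refine (rescale.existsUnique_congr fun v => ?_).1
    ⟨_, h_contracting.fixedPoint_isFixedPt, fun _ => h_contracting.fixedPoint_unique⟩
  exact rescale.symm_apply_eq

section Barrier

variable {E : Type*} [AddCommGroup E] [Module ℝ E] [TopologicalSpace E]

/-- A barrier in direction `φ`, used as the weight of a norm on functions supported in `{φ < s}`.
The exponential is truncated at `φ x = s` so that it is integrable against every finite measure. -/
def barrier (φ : StrongDual ℝ E) (s : ℝ) (x : E) : ℝ :=
  1 - Real.exp (min (φ x - s) 0)

variable (φ : StrongDual ℝ E) (s : ℝ)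

theorem continuous_barrier : Continuous (barrier φ s) := by
  unfold barrier
  fun_prop

theorem barrier_nonneg (x : E) : 0 ≤ barrier φ s x :=
  sub_nonneg.2 (Real.exp_le_one_iff.2 (min_le_right _ _))

theorem barrier_lt_one (x : E) : barrier φ s x < 1 :=
  sub_lt_self _ (Real.exp_pos _)

variable {φ s}

theorem barrier_pos {x : E} (hx : φ x < s) : 0 < barrier φ s x :=
  sub_pos.2 (Real.exp_lt_one_iff.2 (min_lt_of_left_lt (sub_neg.2 hx)))

theorem exp_mul_one_sub_barrier_le {l : ℝ} {x z : E} (hx : φ x + l ≤ s) (hz : l ≤ φ z) :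
    Real.exp l * (1 - barrier φ s x) ≤ 1 - barrier φ s (x + z) := by
  simp only [barrier, sub_sub_cancel, ← Real.exp_add, Real.exp_le_exp, map_add]
  have h_min : min (φ x - s) 0 ≤ φ x - s := min_le_left _ _
  exact le_min (by linarith) (by linarith)

variable [MeasurableSpace E] {ν : Measure E}

theorem exists_dual_measure_ne_zero [SeparatingDual ℝ E] [SecondCountableTopology E]
    (hν : ν {0}ᶜ ≠ 0) : ∃ φ : StrongDual ℝ E, ν {z | 1 ≤ φ z} ≠ 0 := by
  by_contra! h_null
  refine hν (measure_null_of_locally_null _ fun z hz => ?_)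
  obtain ⟨φ, hφ⟩ := SeparatingDual.exists_eq_one (R := ℝ) (mem_compl_singleton_iff.1 hz)
  refine ⟨{y | 1 ≤ ((2 : ℝ) • φ) y}, mem_nhdsWithin_of_mem_nhds ?_, h_null _⟩
  refine ((2 : ℝ) • φ).continuous.continuousAt.eventually_const_le ?_
  simp [hφ]

variable [IsFiniteMeasure ν]

theorem exists_dual_le_exp_mul_measureReal [SeparatingDual ℝ E] [SecondCountableTopology E]
    (hν : ν {0}ᶜ ≠ 0) (c : ℝ) :
    ∃ (φ : StrongDual ℝ E) (l : ℝ), 0 < l ∧ c ≤ Real.exp l * ν.real {z | l ≤ φ z} := by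
  obtain ⟨φ, hφ⟩ := exists_dual_measure_ne_zero hν
  have h_mass : 0 < ν.real {z | 1 ≤ φ z} := ENNReal.toReal_pos hφ (measure_ne_top _ _)
  obtain ⟨l, hl, hl_pos⟩ : ∃ l, c / ν.real {z | 1 ≤ φ z} ≤ Real.exp l ∧ 0 < l :=
    ((Real.tendsto_exp_atTop.eventually_ge_atTop _).and (eventually_gt_atTop 0)).exists
  refine ⟨l • φ, l, hl_pos, ?_⟩
  have h_half_space : {z | l ≤ (l • φ) z} = {z | 1 ≤ φ z} := by
    ext z
    simp [le_mul_iff_one_le_right hl_pos]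
  rwa [h_half_space, ← div_le_iff₀ h_mass]

variable [ContinuousAdd E] [OpensMeasurableSpace E]

theorem integrable_barrier_add (x : E) : Integrable (fun z => barrier φ s (x + z)) ν := by
  have h_cont : Continuous fun z => barrier φ s (x + z) :=
    (continuous_barrier φ s).comp (continuous_const_add x)
  refine .of_bound h_cont.aestronglyMeasurable 1 (.of_forall fun z => ?_)
  rw [Real.norm_of_nonneg (barrier_nonneg φ s _)]
  exact (barrier_lt_one φ s _).le

theorem integral_barrier_add_le {l : ℝ} {x : E} (hx : φ x + l ≤ s)
    (hl : 2 * ν.real univ ≤ Real.exp l * ν.real {z | l ≤ φ z}) :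
    ∫ z, barrier φ s (x + z) ∂ν ≤ ν.real univ * (2 * barrier φ s x - 1) := by
  have h_meas : MeasurableSet {z | l ≤ φ z} :=
    (isClosed_le continuous_const φ.continuous).measurableSet
  have h_int : Integrable (fun z => 1 - barrier φ s (x + z)) ν :=
    (integrable_const 1).sub (integrable_barrier_add x)
  have h_lower : 2 * ν.real univ * (1 - barrier φ s x) ≤ ∫ z, (1 - barrier φ s (x + z)) ∂ν :=
    calc 2 * ν.real univ * (1 - barrier φ s x)
        ≤ Real.exp l * ν.real {z | l ≤ φ z} * (1 - barrier φ s x) :=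
          mul_le_mul_of_nonneg_right hl (sub_nonneg.2 (barrier_lt_one φ s x).le)
      _ = ∫ _ in {z | l ≤ φ z}, Real.exp l * (1 - barrier φ s x) ∂ν := by
          rw [setIntegral_const, smul_eq_mul]
          ring
      _ ≤ ∫ z in {z | l ≤ φ z}, (1 - barrier φ s (x + z)) ∂ν :=
          setIntegral_mono_on integrableOn_const h_int.integrableOn h_meas
            fun z hz => exp_mul_one_sub_barrier_le hx hz
      _ ≤ ∫ z, (1 - barrier φ s (x + z)) ∂ν :=
          setIntegral_le_integral h_int
            (.of_forall fun z => sub_nonneg.2 (barrier_lt_one φ s _).le)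
  rw [integral_sub (integrable_const 1) (integrable_barrier_add x), integral_const, smul_eq_mul,
    mul_one] at h_lower
  linarith

theorem exists_barrier_integral_add_le [SeparatingDual ℝ E] [SecondCountableTopology E]
    (hν : ν {0}ᶜ ≠ 0) {K : Set E} (hK : IsCompact K) :
    ∃ (φ : StrongDual ℝ E) (s : ℝ) (θ : ℝ≥0), θ < 1 ∧ (∀ x ∈ K, 0 < barrier φ s x) ∧
      ∀ x ∈ K, ∫ z, barrier φ s (x + z) ∂ν ≤ θ * (ν.real univ * barrier φ s x) := by
  obtain ⟨φ, l, hl_pos, hl⟩ := exists_dual_le_exp_mul_measureReal hν (2 * ν.real univ)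
  obtain ⟨b, hb⟩ := hK.bddAbove_image φ.continuous.continuousOn
  have hφ_le (x) (hx : x ∈ K) : φ x + l ≤ b + l := add_le_add_left (hb (mem_image_of_mem φ hx)) l
  obtain ⟨c, hc_pos, hc⟩ := hK.exists_forall_le' (a := 0)
    (continuous_const.sub (continuous_barrier φ (b + l))).continuousOn
    fun x _ => sub_pos.2 (barrier_lt_one φ (b + l) x)
  refine ⟨φ, b + l, (1 - c).toNNReal, Real.toNNReal_lt_one.2 (sub_lt_self 1 hc_pos),
    fun x hx => barrier_pos ((lt_add_of_pos_right _ hl_pos).trans_le (hφ_le x hx)),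
    fun x hx => ?_⟩
  set w := barrier φ (b + l) x
  have hw_nonneg : 0 ≤ w := barrier_nonneg _ _ _
  have hcw : c * w ≤ 1 - w :=
    (mul_le_of_le_one_right hc_pos.le (barrier_lt_one φ (b + l) x).le).trans (hc x hx)
  calc ∫ z, barrier φ (b + l) (x + z) ∂ν
      ≤ ν.real univ * (2 * w - 1) := integral_barrier_add_le (hφ_le x hx) hl
    _ ≤ ν.real univ * ((1 - c) * w) := by gcongr; linarith
    _ = (1 - c) * (ν.real univ * w) := by ring
    _ ≤ (1 - c).toNNReal * (ν.real univ * w) := by gcongr; exact Real.le_coe_toNNReal _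

end Barrier

section Translation
variable {G F : Type*} [AddGroup G] [TopologicalSpace G] [IsTopologicalAddGroup G]
  [MeasurableSpace G] [BorelSpace G] [NormedAddCommGroup F] [NormedSpace ℝ F]
  [CompleteSpace F]

theorem continuous_integral_add_of_absolutelyContinuous {μ ν : Measure G} [μ.IsAddLeftInvariant]
    [IsLocallyFiniteMeasure μ] [μ.InnerRegularCompactLTTop] [SigmaFinite μ] [IsFiniteMeasure ν]
    (hνμ : ν ≪ μ) {u : G → F} (hu : MemLp u ∞ μ) :
    Continuous fun x => ∫ z, u (x + z) ∂ν := by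
  set J : G → ℝ := fun z => (ν.rnDeriv μ z).toReal with hJ_def
  have hJ : MemLp J 1 μ := memLp_one_iff_integrable.2 Measure.integrable_toReal_rnDeriv
  let pairing := (ContinuousLinearMap.lsmul ℝ ℝ : ℝ →L[ℝ] F →L[ℝ] F).lpPairing μ 1 ∞
  have h_pairing (x : G) : ∫ z, u (x + z) ∂ν =
      pairing (DomAddAct.mk (-x) +ᵥ hJ.toLp J) (hu.toLp u) := by
    calc ∫ z, u (x + z) ∂ν = ∫ z, J (-x + (x + z)) • u (x + z) ∂μ := by
          simp only [hJ_def, neg_add_cancel_left, integral_rnDeriv_smul hνμ]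
      _ = ∫ y, J (-x + y) • u y ∂μ :=
          integral_add_left_eq_self (fun y => J (-x + y) • u y) x
      _ = pairing (DomAddAct.mk (-x) +ᵥ hJ.toLp J) (hu.toLp u) := by
          rw [ContinuousLinearMap.lpPairing_eq_integral, DomAddAct.mk_vadd_toLp]
          refine integral_congr_ae ?_
          filter_upwards [hu.coeFn_toLp, (hJ.comp_measurePreserving
            (measurePreserving_vadd (-x) μ)).coeFn_toLp] with y hy hJy
          rw [hy, ContinuousLinearMap.lsmul_apply]
          exact congrArg (· • u y) hJy.symm
  simp only [h_pairing]
  have : Fact ((1 : ℝ≥0∞) ≠ ∞) := ⟨ENNReal.one_ne_top⟩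
  have h_translate : Continuous fun x : G => DomAddAct.mk (-x) +ᵥ hJ.toLp J :=
    (DomAddAct.continuous_mk.comp continuous_neg).vadd continuous_const
  exact (pairing.flip (hu.toLp u)).continuous.comp h_translate
end Translation

section ZeroExtend

variable {E F : Type*} [TopologicalSpace E] [NormedAddCommGroup F] {K : Set E}

/-- The extension by zero to the whole space of a continuous function on a subset `K`. -/
def zeroExtend (v : C(K, F)) : E → F :=
  Function.extend Subtype.val v 0

theorem zeroExtend_coe (v : C(K, F)) (x : K) : zeroExtend v x = v x :=
  Subtype.val_injective.extend_apply _ _ _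

theorem zeroExtend_of_notMem (v : C(K, F)) {x : E} (hx : x ∉ K) : zeroExtend v x = 0 :=
  Function.extend_apply' _ _ _ fun ⟨y, hy⟩ => hx (hy ▸ y.2)

theorem zeroExtend_sub (u v : C(K, F)) (x : E) :
    zeroExtend (u - v) x = zeroExtend u x - zeroExtend v x := by
  by_cases hx : x ∈ K
  · lift x to K using hx
    simp only [zeroExtend_coe, ContinuousMap.sub_apply]
  · simp only [zeroExtend_of_notMem _ hx, sub_zero]

theorem continuousOn_zeroExtend (v : C(K, F)) : ContinuousOn (zeroExtend v) K := by
  rw [continuousOn_iff_continuous_domRestrict]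
  exact v.continuous.congr fun x => (zeroExtend_coe v x).symm

theorem exists_zeroExtend_eq {u : E → F} (hu : ContinuousOn u K) (hu_zero : ∀ x ∉ K, u x = 0) :
    ∃ v : C(K, F), zeroExtend v = u := by
  refine ⟨⟨K.domRestrict u, hu.domRestrict⟩, funext fun x => ?_⟩
  by_cases hx : x ∈ K
  · lift x to K using hx
    exact zeroExtend_coe _ x
  · rw [zeroExtend_of_notMem _ hx, hu_zero x hx]

theorem norm_zeroExtend_le_of_forall {v : C(K, F)} {g : E → ℝ} (hg : 0 ≤ g)
    (hv : ∀ x : K, ‖v x‖ ≤ g x) (x : E) : ‖zeroExtend v x‖ ≤ g x := by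
  by_cases hx : x ∈ K
  · lift x to K using hx
    rw [zeroExtend_coe]
    exact hv x
  · rw [zeroExtend_of_notMem v hx, norm_zero]
    exact hg x

theorem norm_zeroExtend_le [CompactSpace K] (v : C(K, F)) (x : E) : ‖zeroExtend v x‖ ≤ ‖v‖ :=
  norm_zeroExtend_le_of_forall (g := fun _ => ‖v‖) (fun _ => norm_nonneg v) v.norm_coe_le_norm x

variable [SecondCountableTopology E] [MeasurableSpace E] [BorelSpace E]

theorem stronglyMeasurable_zeroExtend (hK : MeasurableSet K) (v : C(K, F)) :
    StronglyMeasurable (zeroExtend v) :=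
  (MeasurableEmbedding.subtype_coe hK).stronglyMeasurable_extend v.continuous.stronglyMeasurable
    stronglyMeasurable_const

variable [CompactSpace K] {ν : Measure E} [IsFiniteMeasure ν]

theorem integrable_zeroExtend_add [Add E] [ContinuousAdd E] (hK : MeasurableSet K)
    (v : C(K, F)) (x : E) : Integrable (fun z => zeroExtend v (x + z)) ν :=
  .of_bound ((stronglyMeasurable_zeroExtend hK v).comp_measurable
    (measurable_const_add x)).aestronglyMeasurable ‖v‖
    (.of_forall fun _ => norm_zeroExtend_le v _)

theorem integral_zeroExtend_add_sub [Add E] [ContinuousAdd E] [NormedSpace ℝ F] [CompleteSpace F]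
    (hK : MeasurableSet K) (v : C(K, F)) (x : K) :
    ∫ z, (zeroExtend v (x + z) - zeroExtend v x) ∂ν =
      ∫ z, zeroExtend v (x + z) ∂ν - ν.real univ • v x := by
  rw [integral_sub (integrable_zeroExtend_add hK v x) (integrable_const _), integral_const,
    zeroExtend_coe]

theorem integral_zeroExtend_sub_add [Add E] [ContinuousAdd E] [NormedSpace ℝ F]
    (hK : MeasurableSet K) (u v : C(K, F)) (x : E) :
    ∫ z, zeroExtend (u - v) (x + z) ∂ν =
      ∫ z, zeroExtend u (x + z) ∂ν - ∫ z, zeroExtend v (x + z) ∂ν := by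
  simp only [zeroExtend_sub]
  exact integral_sub (integrable_zeroExtend_add hK u x) (integrable_zeroExtend_add hK v x)

end ZeroExtend

theorem norm_integral_zeroExtend_add_le {E F : Type*} [AddCommGroup E] [Module ℝ E]
    [TopologicalSpace E] [ContinuousAdd E] [MeasurableSpace E] [OpensMeasurableSpace E]
    [NormedAddCommGroup F] [NormedSpace ℝ F] {ν : Measure E} [IsFiniteMeasure ν] {K : Set E}
    {φ : StrongDual ℝ E} {s c : ℝ} (hc : 0 ≤ c) {v : C(K, F)}
    (hv : ∀ x : K, ‖v x‖ ≤ c * barrier φ s x) (x : E) :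
    ‖∫ z, zeroExtend v (x + z) ∂ν‖ ≤ c * ∫ z, barrier φ s (x + z) ∂ν := by
  rw [← integral_const_mul]
  exact norm_integral_le_of_norm_le ((integrable_barrier_add x).const_mul c) <|
    .of_forall fun z => norm_zeroExtend_le_of_forall (g := fun y => c * barrier φ s y)
      (fun y => mul_nonneg hc (barrier_nonneg φ s y)) hv (x + z)

section Equation

variable {E F : Type*} [NormedAddCommGroup E] [NormedSpace ℝ E] [FiniteDimensional ℝ E]
  [MeasurableSpace E] [BorelSpace E] [NormedAddCommGroup F] [NormedSpace ℝ F] [CompleteSpace F]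
  {μ ν : Measure E} [μ.IsAddHaarMeasure] [IsFiniteMeasure ν] {K : Set E}

theorem continuous_integral_zeroExtend_add (hνμ : ν ≪ μ) (hK : IsCompact K) (v : C(K, F)) :
    Continuous fun x => ∫ z, zeroExtend v (x + z) ∂ν := by
  have : ProperSpace E := FiniteDimensional.proper ℝ E
  have : CompactSpace K := isCompact_iff_compactSpace.1 hK
  exact continuous_integral_add_of_absolutelyContinuous hνμ <|
    memLp_top_of_bound (stronglyMeasurable_zeroExtend hK.measurableSet v).aestronglyMeasurable _
      (.of_forall (norm_zeroExtend_le v))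

theorem existsUnique_smul_sub_integral_zeroExtend_eq (hνμ : ν ≪ μ) (hν : ν {0}ᶜ ≠ 0)
    (hK : IsCompact K) (f : C(K, F)) :
    ∃! v : C(K, F), ∀ x : K, ν.real univ • v x - ∫ z, zeroExtend v (x + z) ∂ν = f x := by
  have : ProperSpace E := FiniteDimensional.proper ℝ E
  have : CompactSpace K := isCompact_iff_compactSpace.1 hK
  obtain ⟨φ, s, θ, hθ, hw_pos, hw⟩ := exists_barrier_integral_add_le hν hK
  have hM : 0 < ν.real univ :=
    ENNReal.toReal_pos (fun h => hν (measure_mono_null (subset_univ _) h)) (measure_ne_top _ _)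
  let T (v : C(K, F)) : C(K, F) :=
    ⟨fun x => (ν.real univ)⁻¹ • (∫ z, zeroExtend v (x + z) ∂ν + f x),
      (((continuous_integral_zeroExtend_add hνμ hK v).comp continuous_subtype_val).add
        f.continuous).const_smul _⟩
  have hT (u v : C(K, F)) (c : ℝ) (hc : 0 ≤ c) (huv : ∀ x : K, ‖u x - v x‖ ≤ c * barrier φ s x)
      (x : K) : ‖T u x - T v x‖ ≤ θ * c * barrier φ s x := by
    have h_diff : T u x - T v x = (ν.real univ)⁻¹ • ∫ z, zeroExtend (u - v) (x + z) ∂ν := by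
      simp only [T, ContinuousMap.coe_mk, ← smul_sub, add_sub_add_right_eq_sub,
        integral_zeroExtend_sub_add hK.measurableSet]
    rw [h_diff, norm_smul, norm_inv, Real.norm_of_nonneg hM.le, inv_mul_le_iff₀ hM]
    calc ‖∫ z, zeroExtend (u - v) (x + z) ∂ν‖
        ≤ c * ∫ z, barrier φ s (x + z) ∂ν := norm_integral_zeroExtend_add_le (v := u - v) hc huv x
      _ ≤ c * (θ * (ν.real univ * barrier φ s x)) := mul_le_mul_of_nonneg_left (hw x x.2) hc
      _ = ν.real univ * (θ * c * barrier φ s x) := by ring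
  have h_fixed (v : C(K, F)) : Function.IsFixedPt T v ↔
      ∀ x : K, ν.real univ • v x - ∫ z, zeroExtend v (x + z) ∂ν = f x := by
    rw [Function.IsFixedPt, ContinuousMap.ext_iff]
    refine forall_congr' fun x => ?_
    rw [ContinuousMap.coe_mk, inv_smul_eq_iff₀ hM.ne', sub_eq_iff_eq_add', eq_comm]
  simpa only [h_fixed] using existsUnique_isFixedPt_of_weighted_contraction
    (w := ⟨fun x : K => barrier φ s x, (continuous_barrier φ s).comp continuous_subtype_val⟩)
    (fun x => hw_pos x x.2) hθ hT

theorem statement8_general (hνμ : ν ≪ μ) (hν : ν {0}ᶜ ≠ 0) (hK : IsCompact K) {f : E → F}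
    (hf : ContinuousOn f K) :
    ∃! u : E → F, (∃ C, ∀ x, ‖u x‖ ≤ C) ∧ ContinuousOn u K ∧ (∀ x, x ∉ K → u x = 0) ∧
      ∀ x ∈ K, -∫ z, (u (x + z) - u x) ∂ν = f x := by
  have : ProperSpace E := FiniteDimensional.proper ℝ E
  have : CompactSpace K := isCompact_iff_compactSpace.1 hK
  have h_equation (v : C(K, F)) :
      (∀ x : K, ν.real univ • v x - ∫ z, zeroExtend v (x + z) ∂ν = f x) ↔
        ∀ x ∈ K, -∫ z, (zeroExtend v (x + z) - zeroExtend v x) ∂ν = f x := by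
    rw [Subtype.forall']
    simp only [integral_zeroExtend_add_sub hK.measurableSet, neg_sub]
  obtain ⟨v, hv, hv_unique⟩ := existsUnique_smul_sub_integral_zeroExtend_eq hνμ hν hK
    ⟨K.domRestrict f, hf.domRestrict⟩
  refine ⟨zeroExtend v, ⟨⟨‖v‖, norm_zeroExtend_le v⟩, continuousOn_zeroExtend v,
    fun x hx => zeroExtend_of_notMem v hx, (h_equation v).1 hv⟩, ?_⟩
  rintro u ⟨-, hu, hu_zero, hu_eq⟩
  obtain ⟨v', rfl⟩ := exists_zeroExtend_eq hu hu_zero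
  rw [hv_unique v' ((h_equation v').2 hu_eq)]

end Equation

theorem withDensity_ofReal_compl_singleton_ne_zero {α : Type*} [MeasurableSpace α]
    {μ : Measure α} [NullSingletonClass μ] {f : α → ℝ} (hf : 0 < ∫ z, f z ∂μ) (a : α) :
    μ.withDensity (fun z => ENNReal.ofReal (f z)) {a}ᶜ ≠ 0 := by
  have hf_int : Integrable f μ := .of_integral_ne_zero hf.ne'
  intro h_null
  rw [withDensity_apply_eq_zero' hf_int.aemeasurable.ennreal_ofReal] at h_null
  refine hf.not_ge (integral_nonpos_of_ae ?_)
  filter_upwards [measure_eq_zero_iff_ae_notMem.1 h_null, Measure.ae_ne μ a] with z hz hza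
  simpa [hza] using hz

theorem integral_pos_of_extMass {N : ℕ} {Ω : Set (EuclideanSpace ℝ (Fin N))} (hΩ : Ω.Nonempty)
    {J : EuclideanSpace ℝ (Fin N) → ℝ} (hJ0 : ∀ z, 0 ≤ J z) (hJ : Integrable J) {ν₀ : ℝ}
    (hν₀ : 0 < ν₀) (hext : ExtMass N Ω J ν₀) : 0 < ∫ z, J z := by
  obtain ⟨x, hx⟩ := hΩ
  calc 0 < ν₀ := hν₀
    _ ≤ ∫ z in {z | x + z ∉ Ω}, J z := hext x (subset_closure hx)
    _ ≤ ∫ z, J z := setIntegral_le_integral hJ (.of_forall hJ0)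

theorem iopJ_eq_integral_withDensity {N : ℕ} {J : EuclideanSpace ℝ (Fin N) → ℝ}
    (hJ0 : ∀ z, 0 ≤ J z) (hJ : AEMeasurable J) (u : EuclideanSpace ℝ (Fin N) → ℝ)
    (x : EuclideanSpace ℝ (Fin N)) :
    IopJ N J u x = ∫ z, (u (x + z) - u x) ∂volume.withDensity fun z => ENNReal.ofReal (J z) := by
  rw [integral_withDensity_eq_integral_toReal_smul₀ hJ.ennreal_ofReal
    (.of_forall fun _ => ENNReal.ofReal_lt_top)]
  simp only [IopJ, ENNReal.toReal_ofReal (hJ0 _), smul_eq_mul, mul_comm]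

/-- existence and uniqueness of a bounded solution, continuous on `Ω̄`,
vanishing outside `Ω̄`, of `-I_J[u] = f` on `Ω̄`. -/
theorem statement8 (N : ℕ) (hN : 1 ≤ N)
    (Ω : Set (EuclideanSpace ℝ (Fin N))) (hΩo : IsOpen Ω) (hΩb : Bornology.IsBounded Ω)
    (hΩne : Ω.Nonempty)
    (J : EuclideanSpace ℝ (Fin N) → ℝ) (hJ0 : ∀ z, 0 ≤ J z) (hJint : Integrable J)
    (ν₀ : ℝ) (hν₀ : 0 < ν₀) (hext : ExtMass N Ω J ν₀)
    (f : EuclideanSpace ℝ (Fin N) → ℝ) (hf : ContinuousOn f (closure Ω)) :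
    ∃! u : EuclideanSpace ℝ (Fin N) → ℝ,
      (∃ C, ∀ x, |u x| ≤ C) ∧ ContinuousOn u (closure Ω) ∧
        (∀ x, x ∉ closure Ω → u x = 0) ∧ ∀ x ∈ closure Ω, -IopJ N J u x = f x := by
  have : Nonempty (Fin N) := ⟨⟨0, hN⟩⟩
  have := isFiniteMeasure_withDensity_ofReal hJint.hasFiniteIntegral
  have hJ_pos : 0 < ∫ z, J z := integral_pos_of_extMass hΩne hJ0 hJint hν₀ hext
  simpa only [iopJ_eq_integral_withDensity hJ0 hJint.aemeasurable, Real.norm_eq_abs] using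
    statement8_general (withDensity_absolutelyContinuous volume _)
      (withDensity_ofReal_compl_singleton_ne_zero hJ_pos 0) hΩb.isCompact_closure hf
end
end

section
/- Let Ω ⊂ ℝ^N be a nonempty bounded open set, let J : ℝ^N → [0,∞) be integrable and satisfy the exterior mass condition with constant ν₀ > 0, and let f ∈ C(Ω̄). For a > 0 define the map T_a on continuous functions u : Ω̄ → ℝ by T_a(u)(x) = u(x) − a( ‖J‖_{L¹(ℝ^N)} u(x) − ∫_Ω u(w) J(w − x) dw − f(x) ) for x ∈ Ω̄. Then for every a with 0 < a < min{ν₀^{−1}, ‖J‖_{L¹(ℝ^N)}^{−1}} and all continuous u₁, u₂ : Ω̄ → ℝ, sup_{x ∈ Ω̄} |T_a(u₁)(x) − T_a(u₂)(x)| ≤ (1 − a ν₀) sup_{x ∈ Ω̄} |u₁(x) − u₂(x)|; in particular T_a is a contraction on C(Ω̄). -/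
open MeasureTheory Metric Set Filter

noncomputable section

/-!
Write `L = ∫ J` and let `M` be the supremum of `|u₁ - u₂|`. The difference of the two images at `x`
is `(1 - a L) (u₁ - u₂)(x) + a ∫_Ω (u₁ - u₂)(w) J(w - x) dw`, and `a L ≤ 1` makes the first
coefficient nonnegative. The part of the mass of `J` seen from `x` inside `Ω` is `L` minus the
exterior mass, hence at most `L - ν₀`, and `(1 - a L) M + a (L - ν₀) M = (1 - a ν₀) M`.
-/

section Relaxation

theorem abs_integral_mul_sub_integral_mul_le {α : Type*} [MeasurableSpace α] {m : Measure α}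
    {u v k : α → ℝ} {M : ℝ} (hk : Integrable k m) (hk_nonneg : 0 ≤ᵐ[m] k)
    (hu : Integrable (fun w => u w * k w) m) (hv : Integrable (fun w => v w * k w) m)
    (huv : ∀ᵐ w ∂m, |u w - v w| ≤ M) :
    |(∫ w, u w * k w ∂m) - ∫ w, v w * k w ∂m| ≤ M * ∫ w, k w ∂m := by
  rw [← integral_sub hu hv, ← integral_const_mul, ← Real.norm_eq_abs]
  refine norm_integral_le_of_norm_le (hk.const_mul M) ?_
  filter_upwards [hk_nonneg, huv] with w hkw huvw
  rw [← sub_mul, norm_mul, Real.norm_eq_abs, Real.norm_of_nonneg hkw]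
  exact mul_le_mul_of_nonneg_right huvw hkw

variable {G : Type*} [AddCommGroup G] [MeasurableSpace G]

/-- The map `T_a` of the paper, for a general reference measure `μ`: one damped Picard step, with
damping `a`, for the nonlocal equation `(∫ J) u(x) - ∫_Ω u(w) J(w - x) dw = f(x)`. -/
def relaxationMap (μ : Measure G) (Ω : Set G) (J f : G → ℝ) (a : ℝ) (u : G → ℝ) (x : G) : ℝ :=
  u x - a * ((∫ z, J z ∂μ) * u x - (∫ w in Ω, u w * J (w - x) ∂μ) - f x)

variable [MeasurableAdd G] {μ : Measure G} [μ.IsAddLeftInvariant]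
  {X Ω : Set G} {J u₁ u₂ : G → ℝ} {a ν₀ : ℝ}

theorem setIntegral_comp_sub_add_setIntegral_add_notMem {E : Type*} [NormedAddCommGroup E]
    [NormedSpace ℝ E] {g : G → E} (hΩ : MeasurableSet Ω) (hg : Integrable g μ) (x : G) :
    (∫ w in Ω, g (w - x) ∂μ) + ∫ z in {z | x + z ∉ Ω}, g z ∂μ = ∫ z, g z ∂μ := by
  have hcompl : ∫ z in {z | x + z ∉ Ω}, g z ∂μ = ∫ w in Ωᶜ, g (w - x) ∂μ := by
    simpa only [preimage, mem_compl_iff, add_sub_cancel_left] using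
      (measurePreserving_add_left μ x).setIntegral_preimage_emb
        (measurableEmbedding_addLeft x) (fun w => g (w - x)) Ωᶜ
  rw [hcompl, integral_add_compl hΩ (hg.comp_sub_right x), integral_sub_right_eq_self g x]

theorem abs_relaxationMap_sub_le {M : ℝ} {x : G} (hΩ : MeasurableSet Ω) (hJ0 : ∀ z, 0 ≤ J z)
    (hJ : Integrable J μ) (hext : ν₀ ≤ ∫ z in {z | x + z ∉ Ω}, J z ∂μ) (f : G → ℝ)
    (ha : 0 ≤ a) (haJ : a * ∫ z, J z ∂μ ≤ 1)
    (hu₁ : IntegrableOn (fun w => u₁ w * J (w - x)) Ω μ)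
    (hu₂ : IntegrableOn (fun w => u₂ w * J (w - x)) Ω μ)
    (hΩM : ∀ w ∈ Ω, |u₁ w - u₂ w| ≤ M) (hxM : |u₁ x - u₂ x| ≤ M) :
    |relaxationMap μ Ω J f a u₁ x - relaxationMap μ Ω J f a u₂ x| ≤ (1 - a * ν₀) * M := by
  set L := ∫ z, J z ∂μ
  set I₁ := ∫ w in Ω, u₁ w * J (w - x) ∂μ
  set I₂ := ∫ w in Ω, u₂ w * J (w - x) ∂μ
  have hM : 0 ≤ M := (abs_nonneg _).trans hxM
  have hL : 0 ≤ 1 - a * L := sub_nonneg.2 haJ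
  have hmass : ∫ w in Ω, J (w - x) ∂μ ≤ L - ν₀ := by
    linarith [setIntegral_comp_sub_add_setIntegral_add_notMem hΩ hJ x]
  have hI : |I₁ - I₂| ≤ M * ∫ w in Ω, J (w - x) ∂μ :=
    abs_integral_mul_sub_integral_mul_le (hJ.comp_sub_right x).integrableOn
      (ae_of_all _ fun w => hJ0 (w - x)) hu₁ hu₂ (ae_restrict_of_forall_mem hΩ hΩM)
  calc
    |relaxationMap μ Ω J f a u₁ x - relaxationMap μ Ω J f a u₂ x|
    _ = |(1 - a * L) * (u₁ x - u₂ x) + a * (I₁ - I₂)| := by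
      congr 1
      simp only [relaxationMap]
      ring
    _ ≤ (1 - a * L) * |u₁ x - u₂ x| + a * |I₁ - I₂| := by
      simpa only [abs_mul, abs_of_nonneg hL, abs_of_nonneg ha] using
        abs_add_le ((1 - a * L) * (u₁ x - u₂ x)) (a * (I₁ - I₂))
    _ ≤ (1 - a * L) * M + a * (M * (L - ν₀)) := by
      gcongr
      exact hI.trans (mul_le_mul_of_nonneg_left hmass hM)
    _ = (1 - a * ν₀) * M := by ring

theorem statement9_general (hΩ : MeasurableSet Ω) (hΩX : Ω ⊆ X) (hJ0 : ∀ z, 0 ≤ J z)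
    (hJ : Integrable J μ) (hext : ∀ x ∈ X, ν₀ ≤ ∫ z in {z | x + z ∉ Ω}, J z ∂μ) (f : G → ℝ)
    (ha : 0 ≤ a) (haJ : a * ∫ z, J z ∂μ ≤ 1)
    (hu₁ : ∀ x ∈ X, IntegrableOn (fun w => u₁ w * J (w - x)) Ω μ)
    (hu₂ : ∀ x ∈ X, IntegrableOn (fun w => u₂ w * J (w - x)) Ω μ)
    (hbdd : BddAbove ((fun y => |u₁ y - u₂ y|) '' X)) :
    ∀ x ∈ X, |relaxationMap μ Ω J f a u₁ x - relaxationMap μ Ω J f a u₂ x| ≤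
      (1 - a * ν₀) * sSup ((fun y => |u₁ y - u₂ y|) '' X) := by
  intro x hx
  have hle_sup : ∀ y ∈ X, |u₁ y - u₂ y| ≤ sSup ((fun y => |u₁ y - u₂ y|) '' X) :=
    fun y hy => le_csSup hbdd (mem_image_of_mem _ hy)
  exact abs_relaxationMap_sub_le hΩ hJ0 hJ (hext x hx) f ha haJ (hu₁ x hx) (hu₂ x hx)
    (fun w hw => hle_sup w (hΩX hw)) (hle_sup x hx)

end Relaxation

/-- the fixed point map `T_a` is a contraction on `C(Ω̄)`. -/
theorem statement9 (N : ℕ) (hN : 1 ≤ N)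
    (Ω : Set (EuclideanSpace ℝ (Fin N))) (hΩo : IsOpen Ω) (hΩb : Bornology.IsBounded Ω)
    (hΩne : Ω.Nonempty)
    (J : EuclideanSpace ℝ (Fin N) → ℝ) (hJ0 : ∀ z, 0 ≤ J z) (hJint : Integrable J)
    (ν₀ : ℝ) (hν₀ : 0 < ν₀) (hext : ExtMass N Ω J ν₀)
    (f : EuclideanSpace ℝ (Fin N) → ℝ) (hf : ContinuousOn f (closure Ω))
    (a : ℝ) (ha : 0 < a) (ha' : a < min ν₀⁻¹ (∫ z, J z)⁻¹)
    (u₁ u₂ : EuclideanSpace ℝ (Fin N) → ℝ)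
    (hu₁ : ContinuousOn u₁ (closure Ω)) (hu₂ : ContinuousOn u₂ (closure Ω)) :
    ∀ x ∈ closure Ω,
      |(u₁ x - a * ((∫ z, J z) * u₁ x - (∫ w in Ω, u₁ w * J (w - x)) - f x)) -
          (u₂ x - a * ((∫ z, J z) * u₂ x - (∫ w in Ω, u₂ w * J (w - x)) - f x))| ≤
        (1 - a * ν₀) * sSup ((fun y => |u₁ y - u₂ y|) '' closure Ω) := by
  have hcompact : IsCompact (closure Ω) := hΩb.isCompact_closure
  have hint {u : EuclideanSpace ℝ (Fin N) → ℝ} (hu : ContinuousOn u (closure Ω)) :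
      ∀ x ∈ closure Ω, IntegrableOn (fun w => u w * J (w - x)) Ω := fun x _ =>
    (hJint.comp_sub_right x).integrableOn.continuousOn_mul_of_subset hu hcompact
      hΩo.measurableSet subset_closure
  have haJ : a * ∫ z, J z ≤ 1 :=
    (mul_le_mul_of_nonneg_right (ha'.le.trans (min_le_right _ _)) (integral_nonneg hJ0)).trans
      inv_mul_le_one
  exact statement9_general hΩo.measurableSet subset_closure hJ0 hJint hext f ha.le haJ
    (hint hu₁) (hint hu₂) (hcompact.bddAbove_image (hu₁.sub hu₂).abs)
end
end
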